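/- arXiv:1309.2459 — 11 statements merged into one kernel-verified Lean document; each statement's English description precedes it below -/
import Mathlib

section
/- Let Ω ⊆ ℝ² be open, let f : Ω → ℝ be C², and let p ∈ Ω. Set B := 1 − f_x² − f_y². Suppose that f satisfies the zero mean curvature equation (1 − f_y²) f_xx + 2 f_x f_y f_xy + (1 − f_x²) f_yy = 0 at p and that B(p) = 0. Then the gradient ∇B(p) = (B_x(p), B_y(p)) is nonzero if and only if the Hessian determinant f_xx(p) f_yy(p) − f_xy(p)² is nonzero. -/
/-!
Write `v = ∇f(p)` and let `H` be the Hessian matrix of `f` at `p`. The condition `B(p) = 0` says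
that `v` is a unit vector, the zero mean curvature equation then reads `vᵀ H v = 0`, and the chain
rule together with the symmetry of `H` gives `∇B(p) = -2 H v`. Computing the determinant in the
orthonormal basis `v, w` (with `w` the rotation of `v` by a right angle) yields
`det H = -(wᵀ H v)²`. Since `H v` is orthogonal to `v`, it vanishes exactly when `wᵀ H v` does.
The derivative computations are `pd1_Bfun`, `pd2_Bfun` and `pd1_pd2_eq`; the linear algebra is
`hessian_mul_eq_zero_iff`.
-/

open Set

/-- Partial derivative in the first (x) direction. -/
noncomputable def pd1 {E : Type*} [NormedAddCommGroup E] [NormedSpace ℝ E]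
    (f : ℝ × ℝ → E) (q : ℝ × ℝ) : E := fderiv ℝ f q (1, 0)

/-- Partial derivative in the second (y) direction. -/
noncomputable def pd2 {E : Type*} [NormedAddCommGroup E] [NormedSpace ℝ E]
    (f : ℝ × ℝ → E) (q : ℝ × ℝ) : E := fderiv ℝ f q (0, 1)

/-- B = 1 - f_x^2 - f_y^2. -/
noncomputable def Bfun (f : ℝ × ℝ → ℝ) (q : ℝ × ℝ) : ℝ :=
  1 - (pd1 f q) ^ 2 - (pd2 f q) ^ 2

/-- The zero mean curvature equation at a point:
    (1 - f_y²) f_xx + 2 f_x f_y f_xy + (1 - f_x²) f_yy = 0. -/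
def ZMCAt (f : ℝ × ℝ → ℝ) (q : ℝ × ℝ) : Prop :=
  (1 - (pd2 f q) ^ 2) * pd1 (pd1 f) q
    + 2 * pd1 f q * pd2 f q * pd2 (pd1 f) q
    + (1 - (pd1 f q) ^ 2) * pd2 (pd2 f) q = 0

lemma differentiableAt_fderiv_apply {f : ℝ × ℝ → ℝ} {p : ℝ × ℝ} (hf : ContDiffAt ℝ 2 f p)
    (v : ℝ × ℝ) : DifferentiableAt ℝ (fun q => fderiv ℝ f q v) p :=
  ((hf.fderiv_right (m := 1) (by norm_num)).differentiableAt (by norm_num)).clm_apply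
    (differentiableAt_const v)

lemma fderiv_fderiv_apply {f : ℝ × ℝ → ℝ} {p : ℝ × ℝ} (hf : ContDiffAt ℝ 2 f p)
    (v w : ℝ × ℝ) : fderiv ℝ (fun q => fderiv ℝ f q v) p w = fderiv ℝ (fderiv ℝ f) p w v := by
  have h : DifferentiableAt ℝ (fderiv ℝ f) p :=
    (hf.fderiv_right (m := 1) (by norm_num)).differentiableAt (by norm_num)
  rw [fderiv_clm_apply h (differentiableAt_const v)]
  simp

/-- Equality of mixed partial derivatives. -/
lemma pd1_pd2_eq {f : ℝ × ℝ → ℝ} {p : ℝ × ℝ} (hf : ContDiffAt ℝ 2 f p) :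
    pd1 (pd2 f) p = pd2 (pd1 f) p := by
  have hs : IsSymmSndFDerivAt ℝ f p := hf.isSymmSndFDerivAt (by simp)
  have h := hs (1, 0) (0, 1)
  rw [← fderiv_fderiv_apply hf, ← fderiv_fderiv_apply hf] at h
  exact h

lemma fderiv_Bfun {f : ℝ × ℝ → ℝ} {p : ℝ × ℝ} (hf : ContDiffAt ℝ 2 f p) (w : ℝ × ℝ) :
    fderiv ℝ (Bfun f) p w =
      -2 * (pd1 f p * fderiv ℝ (pd1 f) p w + pd2 f p * fderiv ℝ (pd2 f) p w) := by
  have h1 : HasFDerivAt (pd1 f) (fderiv ℝ (pd1 f) p) p :=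
    (differentiableAt_fderiv_apply hf (1, 0)).hasFDerivAt
  have h2 : HasFDerivAt (pd2 f) (fderiv ℝ (pd2 f) p) p :=
    (differentiableAt_fderiv_apply hf (0, 1)).hasFDerivAt
  have h : HasFDerivAt (Bfun f) _ p := ((h1.pow 2).const_sub 1).sub (h2.pow 2)
  rw [h.fderiv]
  simp
  ring

lemma pd1_Bfun {f : ℝ × ℝ → ℝ} {p : ℝ × ℝ} (hf : ContDiffAt ℝ 2 f p) :
    pd1 (Bfun f) p = -2 * (pd1 f p * pd1 (pd1 f) p + pd2 f p * pd2 (pd1 f) p) := by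
  rw [← pd1_pd2_eq hf]
  exact fderiv_Bfun hf (1, 0)

lemma pd2_Bfun {f : ℝ × ℝ → ℝ} {p : ℝ × ℝ} (hf : ContDiffAt ℝ 2 f p) :
    pd2 (Bfun f) p = -2 * (pd1 f p * pd2 (pd1 f) p + pd2 f p * pd2 (pd2 f) p) :=
  fderiv_Bfun hf (0, 1)

/-- A unit vector `v = (a, b)` that is isotropic for the symmetric matrix `H = (r, s; s, t)` lies
in the kernel of `H` if and only if `H` is singular. -/
lemma hessian_mul_eq_zero_iff {a b r s t : ℝ} (hv : a ^ 2 + b ^ 2 = 1)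
    (hiso : a ^ 2 * r + 2 * a * b * s + b ^ 2 * t = 0) :
    (a * r + b * s = 0 ∧ a * s + b * t = 0) ↔ r * t - s ^ 2 = 0 := by
  constructor
  · rintro ⟨hX, hY⟩
    -- Multiplying `H v = 0` by the adjugate of `H` gives `det H • v = 0`; then pair with `v`.
    linear_combination (-(r * t - s ^ 2)) * hv + (a * t - b * s) * hX + (b * r - a * s) * hY
  · intro hdet
    -- `k = wᵀ H v` for `w = (-b, a)`, and `det H = -k²`.
    have hk : a * (a * s + b * t) - b * (a * r + b * s) = 0 := by
      have hsq : (a * (a * s + b * t) - b * (a * r + b * s)) ^ 2 = 0 := by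
        linear_combination (-(a ^ 2 + b ^ 2) ^ 2) * hdet +
          (b ^ 2 * r - 2 * a * b * s + a ^ 2 * t) * hiso
      exact pow_eq_zero_iff (two_ne_zero) |>.mp hsq
    constructor
    · linear_combination (-(a * r + b * s)) * hv + a * hiso - b * hk
    · linear_combination (-(a * s + b * t)) * hv + b * hiso + a * hk

/-- under the ZMC equation and B(p) = 0, the gradient of B is nonzero
    at p iff the Hessian determinant of f is nonzero at p. -/
theorem stmt0 (Ω : Set (ℝ × ℝ)) (hΩ : IsOpen Ω) (f : ℝ × ℝ → ℝ)
    (hf : ContDiffOn ℝ 2 f Ω) (p : ℝ × ℝ) (hp : p ∈ Ω)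
    (hzmc : ZMCAt f p) (hB : Bfun f p = 0) :
    (pd1 (Bfun f) p, pd2 (Bfun f) p) ≠ (0, 0) ↔
      pd1 (pd1 f) p * pd2 (pd2 f) p - (pd2 (pd1 f) p) ^ 2 ≠ 0 := by
  have hfp : ContDiffAt ℝ 2 f p := hf.contDiffAt (hΩ.mem_nhds hp)
  have hv : pd1 f p ^ 2 + pd2 f p ^ 2 = 1 := by
    unfold Bfun at hB
    linarith
  have hiso : pd1 f p ^ 2 * pd1 (pd1 f) p + 2 * pd1 f p * pd2 f p * pd2 (pd1 f) p
      + pd2 f p ^ 2 * pd2 (pd2 f) p = 0 := by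
    unfold ZMCAt at hzmc
    linear_combination hzmc + (pd1 (pd1 f) p + pd2 (pd2 f) p) * hv
  rw [not_iff_not, ← hessian_mul_eq_zero_iff hv hiso, Prod.mk.injEq, pd1_Bfun hfp, pd2_Bfun hfp]
  simp
end

section
/- Let Ω ⊆ ℝ² be open, let f : Ω → ℝ be C², and set B := 1 − f_x² − f_y². If f satisfies the zero mean curvature equation (1 − f_y²) f_xx + 2 f_x f_y f_xy + (1 − f_x²) f_yy = 0 at a point p ∈ Ω, then at p the identity f_x B_x + f_y B_y = 2 B (f_xx + f_yy) holds; in particular, if additionally B(p) = 0, then the gradients ∇f(p) and ∇B(p) are orthogonal. -/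
/-! Differentiating `B` gives `f_x B_x + f_y B_y = -2 (f_x² f_xx + 2 f_x f_y f_xy + f_y² f_yy)`
by the symmetry of the second derivative of a `C²` function. The difference between this and
`2 B (f_xx + f_yy)` is `-2` times the left-hand side of the zero mean curvature equation. -/

open Set

/-- If `∇f` is differentiable at `p`, differentiating `B = 1 - f_x² - f_y²` in the direction `v`
gives `-2 f_x ∂ᵥf_x - 2 f_y ∂ᵥf_y`, with the mixed derivatives read off from `D²f`. -/
lemma fderiv_Bfun_apply {f : ℝ × ℝ → ℝ} {p : ℝ × ℝ}
    (h : DifferentiableAt ℝ (fderiv ℝ f) p) (v : ℝ × ℝ) :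
    fderiv ℝ (Bfun f) p v =
      -2 * pd1 f p * fderiv ℝ (fderiv ℝ f) p v (1, 0)
        - 2 * pd2 f p * fderiv ℝ (fderiv ℝ f) p v (0, 1) := by
  have h1 : HasFDerivAt (pd1 f) ((fderiv ℝ (fderiv ℝ f) p).flip (1, 0)) p := by
    simpa [pd1] using! h.hasFDerivAt.clm_apply (hasFDerivAt_const ((1 : ℝ), (0 : ℝ)) p)
  have h2 : HasFDerivAt (pd2 f) ((fderiv ℝ (fderiv ℝ f) p).flip (0, 1)) p := by
    simpa [pd2] using! h.hasFDerivAt.clm_apply (hasFDerivAt_const ((0 : ℝ), (1 : ℝ)) p)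
  have hB : HasFDerivAt (Bfun f) _ p := ((h1.pow 2).const_sub 1).sub (h2.pow 2)
  rw [hB.fderiv]
  simp

/-- at a point where the ZMC equation holds,
    f_x B_x + f_y B_y = 2 B (f_xx + f_yy); in particular if B(p) = 0 then
    ∇f(p) and ∇B(p) are orthogonal. -/
theorem stmt1 (Ω : Set (ℝ × ℝ)) (hΩ : IsOpen Ω) (f : ℝ × ℝ → ℝ)
    (hf : ContDiffOn ℝ 2 f Ω) (p : ℝ × ℝ) (hp : p ∈ Ω) (hzmc : ZMCAt f p) :
    pd1 f p * pd1 (Bfun f) p + pd2 f p * pd2 (Bfun f) p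
      = 2 * Bfun f p * (pd1 (pd1 f) p + pd2 (pd2 f) p) ∧
    (Bfun f p = 0 →
      pd1 f p * pd1 (Bfun f) p + pd2 f p * pd2 (Bfun f) p = 0) := by
  have hat : ContDiffAt ℝ 2 f p := hf.contDiffAt (hΩ.mem_nhds hp)
  have hd : DifferentiableAt ℝ (fderiv ℝ f) p :=
    (hat.fderiv_right (m := 1) (by norm_num)).differentiableAt (by norm_num)
  have hsymm : fderiv ℝ (fderiv ℝ f) p (1, 0) (0, 1) = fderiv ℝ (fderiv ℝ f) p (0, 1) (1, 0) :=
    (hat.isSymmSndFDerivAt (by simp)).eq (1, 0) (0, 1)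
  have hpd (v w : ℝ × ℝ) : fderiv ℝ (fun q => fderiv ℝ f q w) p v
      = fderiv ℝ (fderiv ℝ f) p v w := by
    rw [fderiv_clm_apply hd (differentiableAt_const w)]
    simp
  have h11 : pd1 (pd1 f) p = fderiv ℝ (fderiv ℝ f) p (1, 0) (1, 0) := hpd _ _
  have h21 : pd2 (pd1 f) p = fderiv ℝ (fderiv ℝ f) p (0, 1) (1, 0) := hpd _ _
  have h22 : pd2 (pd2 f) p = fderiv ℝ (fderiv ℝ f) p (0, 1) (0, 1) := hpd _ _
  have hB1 : pd1 (Bfun f) p = _ := fderiv_Bfun_apply hd (1, 0)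
  have hB2 : pd2 (Bfun f) p = _ := fderiv_Bfun_apply hd (0, 1)
  have key : pd1 f p * pd1 (Bfun f) p + pd2 f p * pd2 (Bfun f) p
      = 2 * Bfun f p * (pd1 (pd1 f) p + pd2 (pd2 f) p) := by
    unfold ZMCAt at hzmc
    rw [h11, h21, h22] at hzmc
    rw [hB1, hB2, h11, h22, hsymm, Bfun]
    linear_combination (-2) * hzmc
  exact ⟨key, fun h0 => by rw [key, h0]; ring⟩
end

section
/- Let U ⊆ ℂ be a connected open set whose intersection with ℝ contains a nonempty open interval I, and let γ_ℂ : U → ℂ³ be holomorphic such that γ_ℂ(t) ∈ ℝ³ for all t ∈ I and such that the restriction γ := γ_ℂ|_I is a null curve in ℝ³₁, i.e. ⟨γ'(t), γ'(t)⟩ = 0 for t ∈ I. Define φ : U → ℝ³ by φ(u + iv) := Re γ_ℂ(u + iv) (componentwise real part). Then φ is harmonic (φ_uu + φ_vv = 0 on U) and Lorentz-conformal on all of U: ⟨φ_u, φ_u⟩ = ⟨φ_v, φ_v⟩ and ⟨φ_u, φ_v⟩ = 0 at every point of U, where ⟨·,·⟩ is the Lorentz inner product. -/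
/-!
For holomorphic `g`, the chain rule gives `∂ᵤ Re g = Re g'` and `∂ᵥ Re g = Re (i g')`
(`pd1_phiOf`, `pd2_phiOf`). Applied twice to `γ_ℂ`, this yields
`φ_uu + φ_vv = Re (γ_ℂ'' + i² γ_ℂ'') = 0`.

For conformality, let `Q` be the complex extension of the Lorentz quadratic form (`lorentzQuad`).
The function `Q (γ_ℂ')` is holomorphic on `U`; along the interval `γ_ℂ'` is real and equals `γ'`,
so `Q (γ_ℂ')` vanishes there (`lorentzQuad_deriv_ofReal`), hence on all of `U` by the identity
theorem. Since `φ_u - i φ_v = γ_ℂ'`, the real and imaginary parts of `Q (γ_ℂ') = 0` say that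
`⟨φ_u, φ_u⟩ = ⟨φ_v, φ_v⟩` and `⟨φ_u, φ_v⟩ = 0`.
-/

open Set

/-- The Lorentz inner product of ℝ³₁. -/
def lprod (a b : ℝ × ℝ × ℝ) : ℝ :=
  -(a.1 * b.1) + a.2.1 * b.2.1 + a.2.2 * b.2.2

/-- A vector of ℂ³ is real if all three components have vanishing imaginary part. -/
def isRealVec (w : ℂ × ℂ × ℂ) : Prop := w.1.im = 0 ∧ w.2.1.im = 0 ∧ w.2.2.im = 0

/-- Componentwise real part ℂ³ → ℝ³. -/
def reVec (w : ℂ × ℂ × ℂ) : ℝ × ℝ × ℝ := (w.1.re, w.2.1.re, w.2.2.re)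

/-- φ(u,v) = Re γ_ℂ(u+iv). -/
noncomputable def phiOf (γC : ℂ → ℂ × ℂ × ℂ) (q : ℝ × ℝ) : ℝ × ℝ × ℝ :=
  reVec (γC ((q.1 : ℂ) + q.2 * Complex.I))

open Filter Topology

/-- `reVec` as a continuous real-linear map. -/
noncomputable def reVecL : ℂ × ℂ × ℂ →L[ℝ] ℝ × ℝ × ℝ :=
  Complex.reCLM.prodMap (Complex.reCLM.prodMap Complex.reCLM)

/-- The componentwise imaginary part `ℂ³ → ℝ³`, as a continuous real-linear map. -/
noncomputable def imVecL : ℂ × ℂ × ℂ →L[ℝ] ℝ × ℝ × ℝ :=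
  Complex.imCLM.prodMap (Complex.imCLM.prodMap Complex.imCLM)

/-- The identification `(u, v) ↦ u + iv` of `ℝ²` with `ℂ`, as a continuous real-linear map. -/
noncomputable def toComplexL : ℝ × ℝ →L[ℝ] ℂ :=
  (ContinuousLinearMap.fst ℝ ℝ ℝ).smulRight (1 : ℂ) +
    (ContinuousLinearMap.snd ℝ ℝ ℝ).smulRight Complex.I

lemma toComplexL_apply (q : ℝ × ℝ) : toComplexL q = (q.1 : ℂ) + q.2 * Complex.I := by
  simp [toComplexL]

/-- The quadratic form of the complex bilinear extension of the Lorentz product to `ℂ³`. -/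
def lorentzQuad (w : ℂ × ℂ × ℂ) : ℂ := -(w.1 * w.1) + w.2.1 * w.2.1 + w.2.2 * w.2.2

lemma hasFDerivAt_phiOf {g : ℂ → ℂ × ℂ × ℂ} {q : ℝ × ℝ}
    (hg : DifferentiableAt ℂ g (toComplexL q)) :
    HasFDerivAt (phiOf g)
      (reVecL.comp (((fderiv ℂ g (toComplexL q)).restrictScalars ℝ).comp toComplexL)) q := by
  have h := reVecL.hasFDerivAt.comp q
    ((hg.hasFDerivAt.restrictScalars ℝ).comp q toComplexL.hasFDerivAt)
  refine h.congr_of_eventuallyEq (Eventually.of_forall fun p => ?_)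
  simp only [phiOf, ← toComplexL_apply]
  rfl

lemma pd1_phiOf {g : ℂ → ℂ × ℂ × ℂ} {q : ℝ × ℝ}
    (hg : DifferentiableAt ℂ g (toComplexL q)) :
    pd1 (phiOf g) q = phiOf (deriv g) q := by
  rw [pd1, (hasFDerivAt_phiOf hg).fderiv, phiOf, ← toComplexL_apply, ← fderiv_apply_one_eq_deriv]
  simp only [ContinuousLinearMap.comp_apply, ContinuousLinearMap.coe_restrictScalars',
    toComplexL_apply (1, 0)]
  simp only [Complex.ofReal_one, Complex.ofReal_zero, zero_mul, add_zero]
  rfl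

lemma pd2_phiOf {g : ℂ → ℂ × ℂ × ℂ} {q : ℝ × ℝ}
    (hg : DifferentiableAt ℂ g (toComplexL q)) :
    pd2 (phiOf g) q = phiOf (fun z => Complex.I • deriv g z) q := by
  rw [pd2, (hasFDerivAt_phiOf hg).fderiv, phiOf, ← toComplexL_apply, ← fderiv_apply_one_eq_deriv,
    ← map_smul]
  simp only [ContinuousLinearMap.comp_apply, ContinuousLinearMap.coe_restrictScalars',
    toComplexL_apply (0, 1)]
  simp only [Complex.ofReal_one, Complex.ofReal_zero, one_mul, zero_add, smul_eq_mul, mul_one]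
  rfl

lemma harmonic_phiOf {U : Set ℂ} (hU : IsOpen U) {g : ℂ → ℂ × ℂ × ℂ}
    (hg : DifferentiableOn ℂ g U) {q : ℝ × ℝ} (hq : toComplexL q ∈ U) :
    pd1 (pd1 (phiOf g)) q + pd2 (pd2 (phiOf g)) q = 0 := by
  have hnear : ∀ᶠ p in 𝓝 q, toComplexL p ∈ U :=
    toComplexL.continuous.continuousAt.eventually (hU.mem_nhds hq)
  have hdiff : ∀ p, toComplexL p ∈ U → DifferentiableAt ℂ g (toComplexL p) :=
    fun p hp => hg.differentiableAt (hU.mem_nhds hp)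
  have h1 : pd1 (phiOf g) =ᶠ[𝓝 q] phiOf (deriv g) :=
    hnear.mono fun p hp => pd1_phiOf (hdiff p hp)
  have h2 : pd2 (phiOf g) =ᶠ[𝓝 q] phiOf (fun z => Complex.I • deriv g z) :=
    hnear.mono fun p hp => pd2_phiOf (hdiff p hp)
  have hd : DifferentiableAt ℂ (deriv g) (toComplexL q) :=
    (hg.deriv hU).differentiableAt (hU.mem_nhds hq)
  have e1 : pd1 (pd1 (phiOf g)) q = phiOf (deriv (deriv g)) q := by
    rw [← pd1_phiOf hd, pd1, h1.fderiv_eq, pd1]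
  have e2 : pd2 (pd2 (phiOf g)) q =
      phiOf (fun z => Complex.I • deriv (fun z => Complex.I • deriv g z) z) q := by
    rw [← pd2_phiOf (hd.fun_const_smul Complex.I), pd2, h2.fderiv_eq, pd2]
  have e3 : deriv (fun z => Complex.I • deriv g z) (toComplexL q) =
      Complex.I • deriv (deriv g) (toComplexL q) := deriv_fun_const_smul _ hd
  rw [e1, e2]
  simp only [phiOf, ← toComplexL_apply, e3, reVec]
  simp

/-- At a point of the interval the complex derivative is real and equals the derivative of the
real curve, so nullity of the curve is the vanishing of `lorentzQuad` on the complex derivative. -/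
lemma lorentzQuad_deriv_ofReal {a b t : ℝ} (ht : t ∈ Ioo a b) {g : ℂ → ℂ × ℂ × ℂ}
    (hg : DifferentiableAt ℂ g (t : ℂ))
    (hreal : ∀ s ∈ Ioo a b, isRealVec (g (s : ℂ)))
    (hnull : lprod (deriv (fun s : ℝ => reVec (g (s : ℂ))) t)
      (deriv (fun s : ℝ => reVec (g (s : ℂ))) t) = 0) :
    lorentzQuad (deriv g (t : ℂ)) = 0 := by
  have hc : HasDerivAt (fun s : ℝ => g (s : ℂ)) (deriv g (t : ℂ)) t := by
    have h := hg.hasDerivAt.scomp t Complex.ofRealCLM.hasDerivAt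
    rw [Complex.ofRealCLM_apply, Complex.ofReal_one, one_smul] at h
    exact h
  have hre : HasDerivAt (fun s : ℝ => reVec (g (s : ℂ))) (reVec (deriv g (t : ℂ))) t :=
    reVecL.hasFDerivAt.comp_hasDerivAt t hc
  have him : HasDerivAt (fun s : ℝ => imVecL (g (s : ℂ))) (imVecL (deriv g (t : ℂ))) t :=
    imVecL.hasFDerivAt.comp_hasDerivAt t hc
  have hzero : (fun s : ℝ => imVecL (g (s : ℂ))) =ᶠ[𝓝 t] fun _ => 0 := by
    filter_upwards [Ioo_mem_nhds ht.1 ht.2] with s hs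
    obtain ⟨h1, h2, h3⟩ := hreal s hs
    exact Prod.ext h1 (Prod.ext h2 h3)
  have him0 : imVecL (deriv g (t : ℂ)) = 0 :=
    him.unique ((hasDerivAt_const t 0).congr_of_eventuallyEq hzero)
  have h1 : (deriv g (t : ℂ)).1.im = 0 := congrArg (fun w => w.1) him0
  have h2 : (deriv g (t : ℂ)).2.1.im = 0 := congrArg (fun w => w.2.1) him0
  have h3 : (deriv g (t : ℂ)).2.2.im = 0 := congrArg (fun w => w.2.2) him0
  rw [hre.deriv] at hnull
  simp only [lprod, reVec] at hnull
  apply Complex.ext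
  · simpa [lorentzQuad, h1, h2, h3] using hnull
  · simp [lorentzQuad, h1, h2, h3]

lemma frequently_ofReal {P : ℂ → Prop} {m : ℝ} (h : ∀ᶠ t : ℝ in 𝓝 m, P (t : ℂ)) :
    ∃ᶠ z in 𝓝[≠] (m : ℂ), P z := by
  have ht : Tendsto (fun t : ℝ => (t : ℂ)) (𝓝[≠] m) (𝓝[≠] (m : ℂ)) :=
    Complex.continuous_ofReal.continuousAt.continuousWithinAt.tendsto_nhdsWithin
      fun t ht => by simpa using ht
  exact ht.frequently (h.filter_mono nhdsWithin_le_nhds).frequently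

/-- if γ_ℂ is holomorphic on a connected open U, real along a real interval I,
    and its restriction to I is a null curve in ℝ³₁, then φ = Re γ_ℂ is harmonic and
    Lorentz-conformal on all of U. -/
theorem stmt5 (U : Set ℂ) (hU : IsOpen U) (hconn : IsPreconnected U)
    (a b : ℝ) (hab : a < b) (hsub : ∀ t ∈ Ioo a b, (t : ℂ) ∈ U)
    (γC : ℂ → ℂ × ℂ × ℂ) (hγC : DifferentiableOn ℂ γC U)
    (hreal : ∀ t ∈ Ioo a b, isRealVec (γC (t : ℂ)))
    (hnull : ∀ t ∈ Ioo a b,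
      lprod (deriv (fun s : ℝ => reVec (γC (s : ℂ))) t)
            (deriv (fun s : ℝ => reVec (γC (s : ℂ))) t) = 0) :
    ∀ q : ℝ × ℝ, ((q.1 : ℂ) + q.2 * Complex.I) ∈ U →
      pd1 (pd1 (phiOf γC)) q + pd2 (pd2 (phiOf γC)) q = 0 ∧
      lprod (pd1 (phiOf γC) q) (pd1 (phiOf γC) q)
        = lprod (pd2 (phiOf γC) q) (pd2 (phiOf γC) q) ∧
      lprod (pd1 (phiOf γC) q) (pd2 (phiOf γC) q) = 0 := by
  have hderiv : DifferentiableOn ℂ (deriv γC) U := hγC.deriv hU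
  have hQ : DifferentiableOn ℂ (fun z => lorentzQuad (deriv γC z)) U := by
    have h1 := hderiv.fst
    have h2 := hderiv.snd.fst
    have h3 := hderiv.snd.snd
    exact (((h1.mul h1).neg).add (h2.mul h2)).add (h3.mul h3)
  have hm : (a + b) / 2 ∈ Ioo a b := ⟨by linarith, by linarith⟩
  have hvanish : EqOn (fun z => lorentzQuad (deriv γC z)) (fun _ => 0) U := by
    refine (hQ.analyticOnNhd hU).eqOn_of_preconnected_of_frequently_eq
      analyticOnNhd_const hconn (hsub _ hm) (frequently_ofReal ?_)
    filter_upwards [Ioo_mem_nhds hm.1 hm.2] with t ht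
    exact lorentzQuad_deriv_ofReal ht (hγC.differentiableAt (hU.mem_nhds (hsub t ht)))
      hreal (hnull t ht)
  intro q hq
  rw [← toComplexL_apply] at hq
  have hd := hγC.differentiableAt (hU.mem_nhds hq)
  have h0 : lorentzQuad (deriv γC (toComplexL q)) = 0 := hvanish hq
  have hr := congrArg Complex.re h0
  have hi := congrArg Complex.im h0
  simp only [lorentzQuad, Complex.add_re, Complex.neg_re, Complex.mul_re, Complex.zero_re] at hr
  simp only [lorentzQuad, Complex.add_im, Complex.neg_im, Complex.mul_im, Complex.zero_im] at hi
  refine ⟨harmonic_phiOf hU hγC hq, ?_, ?_⟩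
  · rw [pd1_phiOf hd, pd2_phiOf hd]
    simp only [phiOf, ← toComplexL_apply, lprod, reVec, Prod.smul_fst, Prod.smul_snd, smul_eq_mul,
      Complex.mul_re, Complex.I_re, Complex.I_im]
    linarith
  · rw [pd1_phiOf hd, pd2_phiOf hd]
    simp only [phiOf, ← toComplexL_apply, lprod, reVec, Prod.smul_fst, Prod.smul_snd, smul_eq_mul,
      Complex.mul_re, Complex.I_re, Complex.I_im]
    linarith
end

section
/- Let U ⊆ ℂ be a connected open set whose intersection with ℝ contains a nonempty open interval I, and let γ_ℂ : U → ℂ³ be holomorphic such that γ_ℂ(t) ∈ ℝ³ for all t ∈ I and such that γ := γ_ℂ|_I is a null curve in ℝ³₁ (⟨γ', γ'⟩ = 0, γ' ≠ 0 on I) which is non-degenerate at u₀ ∈ I (γ''(u₀) is not a scalar multiple of γ'(u₀)). Define φ(u + iv) := Re γ_ℂ(u + iv). Then there exists ε > 0 such that for all (u, v) with |u − u₀| < ε and 0 < |v| < ε, one has ⟨φ_u(u,v), φ_u(u,v)⟩ > 0; together with the conformality identities ⟨φ_u,φ_u⟩ = ⟨φ_v,φ_v⟩ and ⟨φ_u,φ_v⟩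 = 0, this means the induced metric of φ is positive definite there, so φ is a space-like (maximal) surface for v ≠ 0 near the curve. -/
/-!
Write `F = γC'`. By the Cauchy–Riemann equations `φ_u = Re F` and `φ_v = -Im F`. The bilinear
extension of the Lorentz product satisfies `⟨F, F⟩ = 0` on the real interval, hence near `u₀` by the
identity theorem; its real and imaginary parts are the conformality identities, and in particular
`⟨φ_u, φ_u⟩ = ⟨Im F, Im F⟩`.

Since `F` is real on the interval and strictly differentiable at `u₀`,
`Im F(u + iv) = Im (F(u + iv) - F(u)) = v (γ''(u₀) + o(1))` as `(u, v) → (u₀, 0)`, so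
`⟨φ_u, φ_u⟩ = v² (⟨γ''(u₀), γ''(u₀)⟩ + o(1))`. Finally `γ''(u₀)` is orthogonal to the nonzero null
vector `γ'(u₀)` and not a multiple of it, which forces it to be space-like (`lprod_pos`).
-/

open Set

open Filter Topology

/-- `reVec` as a continuous real-linear map. -/
noncomputable def reL : ℂ × ℂ × ℂ →L[ℝ] ℝ × ℝ × ℝ :=
  Complex.reCLM.prodMap (Complex.reCLM.prodMap Complex.reCLM)

/-- Componentwise imaginary part, as a continuous real-linear map. -/
noncomputable def imL : ℂ × ℂ × ℂ →L[ℝ] ℝ × ℝ × ℝ :=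
  Complex.imCLM.prodMap (Complex.imCLM.prodMap Complex.imCLM)

/-- The complex-bilinear extension of the Lorentz quadratic form. -/
def cquad (w : ℂ × ℂ × ℂ) : ℂ := -(w.1 * w.1) + w.2.1 * w.2.1 + w.2.2 * w.2.2

/-- The map `(u, v) ↦ u + iv`, real-linear and continuous. -/
noncomputable def toC : ℝ × ℝ →L[ℝ] ℂ :=
  Complex.ofRealCLM.comp (ContinuousLinearMap.fst ℝ ℝ ℝ) +
    (Complex.ofRealCLM.comp (ContinuousLinearMap.snd ℝ ℝ ℝ)).smulRight Complex.I

lemma toC_apply (q : ℝ × ℝ) : toC q = (q.1 : ℂ) + q.2 * Complex.I := by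
  simp [toC]

lemma reL_apply (w : ℂ × ℂ × ℂ) : reL w = reVec w := rfl

lemma imL_eq_zero {w : ℂ × ℂ × ℂ} : imL w = 0 ↔ isRealVec w := by
  simp [imL, isRealVec, Prod.ext_iff]

/-- The derivative along the real axis of a real-linear image of a holomorphic map. -/
lemma hasDerivAt_real (L : ℂ × ℂ × ℂ →L[ℝ] ℝ × ℝ × ℝ) {f : ℂ → ℂ × ℂ × ℂ} {f' : ℂ × ℂ × ℂ}
    {t : ℝ} (h : HasDerivAt f f' (t : ℂ)) :
    HasDerivAt (fun s : ℝ => L (f s)) (L f') t := by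
  have h1 : HasDerivAt (fun s : ℝ => (s : ℂ)) 1 t := Complex.ofRealCLM.hasDerivAt
  have h2 := HasDerivAt.scomp t h h1
  rw [one_smul] at h2
  exact L.hasFDerivAt.comp_hasDerivAt t h2

lemma hasFDerivAt_phiOf_s7 {f : ℂ → ℂ × ℂ × ℂ} {f' : ℂ × ℂ × ℂ} {q : ℝ × ℝ}
    (h : HasDerivAt f f' (toC q)) :
    HasFDerivAt (phiOf f) (reL.comp ((toC : ℝ × ℝ →L[ℝ] ℂ).smulRight f')) q := by
  have h1 := (h.hasFDerivAt.restrictScalars ℝ).comp q toC.hasFDerivAt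
  have h2 := reL.hasFDerivAt.comp q h1
  have e : phiOf f = reL ∘ f ∘ toC := by
    funext p
    simp [phiOf, toC_apply, reL_apply]
  rw [e]
  exact h2

lemma pd1_phiOf_s7 {f : ℂ → ℂ × ℂ × ℂ} {f' : ℂ × ℂ × ℂ} {q : ℝ × ℝ}
    (h : HasDerivAt f f' (toC q)) : pd1 (phiOf f) q = reL f' := by
  rw [pd1, (hasFDerivAt_phiOf_s7 h).fderiv]
  simp [toC_apply]

lemma pd2_phiOf_s7 {f : ℂ → ℂ × ℂ × ℂ} {f' : ℂ × ℂ × ℂ} {q : ℝ × ℝ}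
    (h : HasDerivAt f f' (toC q)) : pd2 (phiOf f) q = -imL f' := by
  rw [pd2, (hasFDerivAt_phiOf_s7 h).fderiv]
  simp [toC_apply, reL, imL, Prod.ext_iff]

/-- The real and imaginary parts of a complex null vector have the same Lorentz square and are
orthogonal. -/
lemma conformal_of_cquad {w : ℂ × ℂ × ℂ} (h : cquad w = 0) :
    lprod (reL w) (reL w) = lprod (imL w) (imL w) ∧ lprod (reL w) (imL w) = 0 := by
  have h1 := congrArg Complex.re h
  have h2 := congrArg Complex.im h
  simp [cquad] at h1 h2
  simp [lprod, reL, imL]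
  constructor <;> linarith

/-- A vector orthogonal to a nonzero null vector, and not a multiple of it, is space-like. -/
lemma lprod_pos {p q : ℝ × ℝ × ℝ} (hp : p ≠ 0) (hpp : lprod p p = 0) (hpq : lprod p q = 0)
    (hq : ¬ ∃ c : ℝ, q = c • p) : 0 < lprod q q := by
  obtain ⟨p0, p1, p2⟩ := p
  obtain ⟨q0, q1, q2⟩ := q
  simp only [lprod] at *
  have hp0 : p0 ≠ 0 := by
    rintro rfl
    have h1 : p1 = 0 := by nlinarith [mul_self_nonneg p1, mul_self_nonneg p2]
    have h2 : p2 = 0 := by nlinarith [mul_self_nonneg p1, mul_self_nonneg p2]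
    exact hp (by simp [h1, h2])
  by_contra! hle
  apply hq
  -- `c` is chosen so that `r = q - c p` has no time component.
  obtain ⟨c, hc⟩ : ∃ c, q0 = c * p0 := ⟨q0 / p0, by field_simp⟩
  subst hc
  have hr : (q1 - c * p1) ^ 2 + (q2 - c * p2) ^ 2 ≤ 0 := by
    linear_combination hle + c ^ 2 * hpp - 2 * c * hpq
  have h1 : q1 - c * p1 = 0 := by nlinarith [sq_nonneg (q1 - c * p1), sq_nonneg (q2 - c * p2)]
  have h2 : q2 - c * p2 = 0 := by nlinarith [sq_nonneg (q1 - c * p1), sq_nonneg (q2 - c * p2)]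
  exact ⟨c, by simp [Prod.ext_iff]; constructor <;> linarith⟩

lemma continuous_lprod_self : Continuous fun w : ℝ × ℝ × ℝ => lprod w w := by
  unfold lprod
  fun_prop

lemma lprod_smul_self (c : ℝ) (w : ℝ × ℝ × ℝ) : lprod (c • w) (c • w) = c ^ 2 * lprod w w := by
  simp [lprod]
  ring

/-- If the Lorentz square of a curve vanishes near `t`, its velocity at `t` is orthogonal to it. -/
lemma lprod_deriv_eq_zero {g : ℝ → ℝ × ℝ × ℝ} {g' : ℝ × ℝ × ℝ} {t : ℝ} (hg : HasDerivAt g g' t)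
    (h0 : ∀ᶠ s in 𝓝 t, lprod (g s) (g s) = 0) : lprod (g t) g' = 0 := by
  have a1 : HasDerivAt (fun s => (g s).1) g'.1 t := hg.fst
  have a2 : HasDerivAt (fun s => (g s).2.1) g'.2.1 t := hg.snd.fst
  have a3 : HasDerivAt (fun s => (g s).2.2) g'.2.2 t := hg.snd.snd
  have h1 := (((a1.mul a1).neg).add (a2.mul a2)).add (a3.mul a3)
  have h2 : HasDerivAt (fun _ : ℝ => (0 : ℝ)) _ t :=
    h1.congr_of_eventuallyEq (h0.mono fun s hs => hs.symm)
  have h3 := h2.unique (hasDerivAt_const t 0)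
  simp only [lprod]
  linarith

/-- If `F` is strictly differentiable at `u₀` and real on the real axis near `u₀`, then
`Im F(u + iv) = v (Re F'(u₀) + o(1))` as `(u, v) → (u₀, 0)`. -/
lemma tendsto_im_quotient {F : ℂ → ℂ × ℂ × ℂ} {F' : ℂ × ℂ × ℂ} {u₀ : ℝ}
    (hF : HasStrictDerivAt F F' (u₀ : ℂ))
    (hreal : ∀ᶠ t : ℝ in 𝓝 u₀, imL (F t) = 0) :
    Tendsto (fun q : ℝ × ℝ => q.2⁻¹ • (imL (F (toC q)) - q.2 • reL F')) (𝓝 (u₀, 0)) (𝓝 0) := by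
  have hlim : Tendsto (fun q : ℝ × ℝ => (toC q, (q.1 : ℂ))) (𝓝 (u₀, 0))
      (𝓝 ((u₀ : ℂ), (u₀ : ℂ))) := by
    have hc : Continuous fun q : ℝ × ℝ => (toC q, (q.1 : ℂ)) := by fun_prop
    have := hc.tendsto (u₀, 0)
    simpa [toC_apply] using this
  have h1 := (hF.hasStrictFDerivAt.isLittleO).comp_tendsto hlim
  have h2 : (fun q : ℝ × ℝ => imL (F (toC q)) - q.2 • reL F') =o[𝓝 (u₀, 0)]
      fun q : ℝ × ℝ => q.2 := by
    have h3 := (imL.isBigO_comp _ (𝓝 (u₀, (0 : ℝ)))).trans_isLittleO h1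
    have h4 := h3.trans_isBigO (k := fun q : ℝ × ℝ => q.2)
      (Asymptotics.IsBigO.of_bound 1 (Eventually.of_forall fun q => by simp [toC_apply]))
    refine h4.congr' ?_ EventuallyEq.rfl
    have hr : ∀ᶠ q : ℝ × ℝ in 𝓝 (u₀, 0), imL (F q.1) = 0 :=
      (continuous_fst.tendsto (u₀, (0 : ℝ))).eventually hreal
    filter_upwards [hr] with q hq
    have e : imL (((q.2 : ℂ) * Complex.I) • F') = q.2 • reL F' := by
      simp [imL, reL, Prod.ext_iff]
    simp [toC_apply, hq, e]
  exact h2.tendsto_inv_smul_nhds_zero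

/-- near a point where the real null curve γ = γ_ℂ|ℝ is non-degenerate,
    the surface φ = Re γ_ℂ is space-like for 0 < |v| small: ⟨φ_u, φ_u⟩ > 0, and together
    with the conformality identities its induced metric is positive definite there. -/
theorem stmt7 (U : Set ℂ) (hU : IsOpen U) (hconn : IsPreconnected U)
    (a b : ℝ) (hab : a < b) (hsub : ∀ t ∈ Ioo a b, (t : ℂ) ∈ U)
    (γC : ℂ → ℂ × ℂ × ℂ) (hγC : DifferentiableOn ℂ γC U)
    (hreal : ∀ t ∈ Ioo a b, isRealVec (γC (t : ℂ)))
    (hnull : ∀ t ∈ Ioo a b,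
      lprod (deriv (fun s : ℝ => reVec (γC (s : ℂ))) t)
            (deriv (fun s : ℝ => reVec (γC (s : ℂ))) t) = 0)
    (hreg : ∀ t ∈ Ioo a b, deriv (fun s : ℝ => reVec (γC (s : ℂ))) t ≠ 0)
    (u₀ : ℝ) (hu₀ : u₀ ∈ Ioo a b)
    (hnd : ¬ ∃ c : ℝ,
      deriv (deriv (fun s : ℝ => reVec (γC (s : ℂ)))) u₀
        = c • deriv (fun s : ℝ => reVec (γC (s : ℂ))) u₀) :
    ∃ ε > 0, ∀ u v : ℝ, |u - u₀| < ε → 0 < |v| → |v| < ε →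
      ((u : ℂ) + v * Complex.I) ∈ U ∧
      0 < lprod (pd1 (phiOf γC) (u, v)) (pd1 (phiOf γC) (u, v)) ∧
      lprod (pd1 (phiOf γC) (u, v)) (pd1 (phiOf γC) (u, v))
        = lprod (pd2 (phiOf γC) (u, v)) (pd2 (phiOf γC) (u, v)) ∧
      lprod (pd1 (phiOf γC) (u, v)) (pd2 (phiOf γC) (u, v)) = 0 := by
  have hγ : ∀ z ∈ U, HasDerivAt γC (deriv γC z) z := fun z hz =>
    (hγC.differentiableAt (hU.mem_nhds hz)).hasDerivAt
  have hI : Ioo a b ∈ 𝓝 u₀ := isOpen_Ioo.mem_nhds hu₀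
  have hFan : AnalyticAt ℂ (deriv γC) u₀ :=
    (hγC.analyticAt (hU.mem_nhds (hsub u₀ hu₀))).deriv
  set F := deriv γC with hFdef
  have hF : HasStrictDerivAt F (deriv F u₀) (u₀ : ℂ) := hFan.hasStrictDerivAt
  have hd1 : ∀ t ∈ Ioo a b, deriv (fun s : ℝ => reVec (γC (s : ℂ))) t = reL (F t) :=
    fun t ht => (hasDerivAt_real reL (hγ t (hsub t ht))).deriv
  have hFreal : ∀ t ∈ Ioo a b, imL (F t) = 0 := by
    intro t ht
    have h0 : (fun _ : ℝ => (0 : ℝ × ℝ × ℝ)) =ᶠ[𝓝 t] fun s : ℝ => imL (γC s) := by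
      filter_upwards [isOpen_Ioo.mem_nhds ht] with s hs using (imL_eq_zero.2 (hreal s hs)).symm
    exact ((hasDerivAt_real imL (hγ t (hsub t ht))).congr_of_eventuallyEq h0).unique
      (hasDerivAt_const t 0)
  have hFreal' : ∀ᶠ t : ℝ in 𝓝 u₀, imL (F t) = 0 := by
    filter_upwards [hI] with t ht using hFreal t ht
  have hFnull : ∀ t ∈ Ioo a b, lprod (reL (F t)) (reL (F t)) = 0 := fun t ht => by
    have := hnull t ht
    rwa [hd1 t ht] at this
  have hd2' := hasDerivAt_real reL hF.hasDerivAt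
  have hd2 : deriv (deriv (fun s : ℝ => reVec (γC (s : ℂ)))) u₀ = reL (deriv F u₀) := by
    have e : deriv (fun s : ℝ => reVec (γC (s : ℂ))) =ᶠ[𝓝 u₀] fun s : ℝ => reL (F s) := by
      filter_upwards [hI] with t ht using hd1 t ht
    rw [e.deriv_eq, hd2'.deriv]
  have hpos : 0 < lprod (reL (deriv F u₀)) (reL (deriv F u₀)) := by
    refine lprod_pos (p := reL (F u₀)) ?_ (hFnull u₀ hu₀) ?_ ?_
    · rw [← hd1 u₀ hu₀]; exact hreg u₀ hu₀
    · exact lprod_deriv_eq_zero hd2' (by filter_upwards [hI] with t ht using hFnull t ht)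
    · rw [← hd1 u₀ hu₀, ← hd2]; exact hnd
  -- The identity theorem propagates `⟨F, F⟩ = 0` from the real axis to a neighbourhood of `u₀`.
  have hcq : ∀ᶠ z in 𝓝 (u₀ : ℂ), cquad (F z) = 0 := by
    have han : AnalyticAt ℂ (fun z => cquad (F z)) u₀ := by
      have c1 : AnalyticAt ℂ (fun z => (F z).1) u₀ := analyticAt_fst.comp hFan
      have c2 : AnalyticAt ℂ (fun z => (F z).2) u₀ := analyticAt_snd.comp hFan
      have c3 : AnalyticAt ℂ (fun z => (F z).2.1) u₀ := analyticAt_fst.comp c2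
      have c4 : AnalyticAt ℂ (fun z => (F z).2.2) u₀ := analyticAt_snd.comp c2
      exact (((c1.mul c1).neg).add (c3.mul c3)).add (c4.mul c4)
    rw [← han.frequently_zero_iff_eventually_zero]
    have ht : Tendsto (fun t : ℝ => (t : ℂ)) (𝓝[≠] u₀) (𝓝[≠] (u₀ : ℂ)) :=
      Complex.continuous_ofReal.continuousAt.continuousWithinAt.tendsto_nhdsWithin
        fun t ht => by simpa using ht
    refine ht.frequently (Eventually.frequently ?_)
    filter_upwards [mem_nhdsWithin_of_mem_nhds hI] with t ht
    have h1 := hFnull t ht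
    obtain ⟨i1, i2, i3⟩ := imL_eq_zero.1 (hFreal t ht)
    simp [lprod, reL] at h1
    apply Complex.ext <;> simp [cquad, i1, i2, i3, h1]
  have hlim : Tendsto toC (𝓝 (u₀, 0)) (𝓝 (u₀ : ℂ)) := by
    have := toC.continuous.tendsto (u₀, 0)
    simpa [toC_apply] using this
  have hT := (tendsto_im_quotient hF hFreal').add_const (reL (deriv F u₀))
  rw [zero_add] at hT
  have hTpos := ((continuous_lprod_self.tendsto _).comp hT).eventually (lt_mem_nhds hpos)
  obtain ⟨ε, hε, hball⟩ := Metric.eventually_nhds_iff.1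
    (hTpos.and ((hlim.eventually hcq).and (hlim.eventually (hU.mem_nhds (hsub u₀ hu₀)))))
  refine ⟨ε, hε, fun u v hu hv0 hv => ?_⟩
  obtain ⟨h1, h2, h3⟩ := hball (y := (u, v)) (by
    rw [Prod.dist_eq, Real.dist_eq, Real.dist_eq]
    simpa using ⟨hu, hv⟩)
  have hv : v ≠ 0 := abs_pos.1 hv0
  obtain ⟨k1, k2⟩ := conformal_of_cquad h2
  have hD := hγ _ h3
  rw [pd1_phiOf_s7 hD, pd2_phiOf_s7 hD]
  refine ⟨toC_apply (u, v) ▸ h3, ?_, ?_, ?_⟩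
  · have e : imL (F (toC (u, v))) =
        v • (v⁻¹ • (imL (F (toC (u, v))) - v • reL (deriv F u₀)) + reL (deriv F u₀)) := by
      rw [smul_add, smul_inv_smul₀ hv, sub_add_cancel]
    rw [k1, e, lprod_smul_self]
    exact mul_pos (by positivity) h1
  · rw [k1]
    simp [lprod]
  · simp only [lprod, Prod.fst_neg, Prod.snd_neg] at k2 ⊢
    linarith
end

section
/- Let γ : (a, b) → ℝ³ be a C² null curve in ℝ³₁ (⟨γ'(t), γ'(t)⟩ = 0, γ'(t) ≠ 0 for all t) which is non-degenerate at u₀ (γ''(u₀) is not a scalar multiple of γ'(u₀)). Define Ψ(u, v) := (γ(u+v) + γ(u−v))/2 where defined. Then: (i) Ψ_uu = Ψ_vv; (ii) ⟨Ψ_u, Ψ_u⟩ = −⟨Ψ_v, Ψ_v⟩ = (1/2)⟨γ'(u+v), γ'(u−v)⟩ and ⟨Ψ_u, Ψ_v⟩ = 0; (iii) there exists ε > 0 such that for |u − u₀| < ε and 0 < |v| < ε, the determinant of the induced metric satisfies ⟨Ψ_u,Ψ_u⟩⟨Ψ_v,Ψ_v⟩ − ⟨Ψ_u,Ψ_v⟩²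 < 0, i.e. Ψ is a time-like surface there. -/
/-!
Write `p = γ'`. By the chain rule `Ψ_u = (p(u+v) + p(u-v))/2` and `Ψ_v = (p(u+v) - p(u-v))/2`
(`pd_split`); a second application gives `Ψ_uu = Ψ_vv`, and expanding the Lorentz product of these
expressions, with `p` null, gives the formulas for the first fundamental form. Its determinant is
`-(⟨p(u+v), p(u-v)⟩/2)²`, so it remains to see that `⟨p s, p t⟩ ≠ 0` for distinct `s, t` near `u₀`.

Since `p` is null, `⟨p s - p t, p s - p t⟩ = -2 ⟨p s, p t⟩`. As `p` is `C¹`, it is strictly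
differentiable at `u₀`, so `(p s - p t)/(s - t)` is close to `ξ = γ''(u₀)` for `s, t` near `u₀`.
Differentiating `⟨p, p⟩ = 0` shows that `ξ` is orthogonal to the nonzero null vector `p u₀`; not being
a multiple of `p u₀`, it is space-like (`lprod_self_pos`). Hence the difference quotient is
space-like too, and in particular `⟨p s, p t⟩ ≠ 0`.
-/

open Set

/-- Ψ(u,v) = (γ(u+v) + γ(u−v))/2. -/
noncomputable def PsiOf (γ : ℝ → ℝ × ℝ × ℝ) (q : ℝ × ℝ) : ℝ × ℝ × ℝ :=
  (2⁻¹ : ℝ) • (γ (q.1 + q.2) + γ (q.1 - q.2))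

/-- Chain rule for sums of a function of `u + v` and a function of `u - v`. Two functions are
allowed so that the rule also applies to `Ψ_v`, where the second one is `-γ'`. -/
lemma hasFDerivAt_split {f g : ℝ → ℝ × ℝ × ℝ} {f' g' : ℝ × ℝ × ℝ} {q : ℝ × ℝ}
    (hf : HasDerivAt f f' (q.1 + q.2)) (hg : HasDerivAt g g' (q.1 - q.2)) :
    HasFDerivAt (fun q : ℝ × ℝ => (2⁻¹ : ℝ) • (f (q.1 + q.2) + g (q.1 - q.2)))
      ((2⁻¹ : ℝ) • ((ContinuousLinearMap.fst ℝ ℝ ℝ + ContinuousLinearMap.snd ℝ ℝ ℝ).smulRight f'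
        + (ContinuousLinearMap.fst ℝ ℝ ℝ - ContinuousLinearMap.snd ℝ ℝ ℝ).smulRight g')) q := by
  have h1 : HasFDerivAt (fun q : ℝ × ℝ => q.1 + q.2)
      (ContinuousLinearMap.fst ℝ ℝ ℝ + ContinuousLinearMap.snd ℝ ℝ ℝ) q :=
    hasFDerivAt_fst.add hasFDerivAt_snd
  have h2 : HasFDerivAt (fun q : ℝ × ℝ => q.1 - q.2)
      (ContinuousLinearMap.fst ℝ ℝ ℝ - ContinuousLinearMap.snd ℝ ℝ ℝ) q :=
    hasFDerivAt_fst.sub hasFDerivAt_snd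
  refine ((((hf.hasFDerivAt.comp q h1).add (hg.hasFDerivAt.comp q h2)).const_smul
    (2⁻¹ : ℝ))).congr_fderiv ?_
  ext <;> simp

lemma pd_split {f g : ℝ → ℝ × ℝ × ℝ} {f' g' : ℝ × ℝ × ℝ} {q : ℝ × ℝ} {F : ℝ × ℝ → ℝ × ℝ × ℝ}
    (hF : F =ᶠ[nhds q] fun q : ℝ × ℝ => (2⁻¹ : ℝ) • (f (q.1 + q.2) + g (q.1 - q.2)))
    (hf : HasDerivAt f f' (q.1 + q.2)) (hg : HasDerivAt g g' (q.1 - q.2)) :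
    pd1 F q = (2⁻¹ : ℝ) • (f' + g') ∧ pd2 F q = (2⁻¹ : ℝ) • (f' - g') := by
  have h := ((hasFDerivAt_split hf hg).congr_of_eventuallyEq hF).fderiv
  constructor
  · rw [pd1, h]; simp
  · rw [pd2, h]; simp [sub_eq_add_neg]

/-- A vector orthogonal to a nonzero null vector `p`, and not a multiple of `p`, is space-like. -/
lemma lprod_self_pos {p x : ℝ × ℝ × ℝ} (hp : lprod p p = 0) (hp0 : p ≠ 0)
    (hpx : lprod p x = 0) (hx : ¬ ∃ c : ℝ, x = c • p) : 0 < lprod x x := by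
  obtain ⟨p1, p2, p3⟩ := p
  obtain ⟨x1, x2, x3⟩ := x
  simp only [lprod] at *
  have h1 : p1 ≠ 0 := by
    rintro rfl
    apply hp0
    have h2 : p2 = 0 := by nlinarith [sq_nonneg p2, sq_nonneg p3]
    have h3 : p3 = 0 := by nlinarith [sq_nonneg p2, sq_nonneg p3]
    simp [h2, h3]
  by_contra hle
  apply hx
  -- Subtracting `(x1 / p1) • p` kills the time component and leaves the Lorentz square unchanged.
  have key : (p1 * x2 - x1 * p2) ^ 2 + (p1 * x3 - x1 * p3) ^ 2
      = p1 ^ 2 * (-(x1 * x1) + x2 * x2 + x3 * x3) := by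
    linear_combination (x1 ^ 2) * hp - 2 * p1 * x1 * hpx
  have hnp : p1 ^ 2 * (-(x1 * x1) + x2 * x2 + x3 * x3) ≤ 0 :=
    mul_nonpos_of_nonneg_of_nonpos (sq_nonneg _) (not_lt.1 hle)
  have e2 : p1 * x2 - x1 * p2 = 0 := by
    apply pow_eq_zero_iff (two_ne_zero) |>.1
    nlinarith [sq_nonneg (p1 * x2 - x1 * p2), sq_nonneg (p1 * x3 - x1 * p3)]
  have e3 : p1 * x3 - x1 * p3 = 0 := by
    apply pow_eq_zero_iff (two_ne_zero) |>.1
    nlinarith [sq_nonneg (p1 * x2 - x1 * p2), sq_nonneg (p1 * x3 - x1 * p3)]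
  refine ⟨x1 / p1, ?_⟩
  simp only [Prod.smul_mk, smul_eq_mul, Prod.mk.injEq]
  refine ⟨by field_simp, ?_, ?_⟩
  · field_simp; linarith
  · field_simp; linarith

lemma lprod_deriv_eq_zero_s8 {p : ℝ → ℝ × ℝ × ℝ} {x : ℝ × ℝ × ℝ} {u : ℝ}
    (hp : HasDerivAt p x u) (h0 : ∀ᶠ t in nhds u, lprod (p t) (p t) = 0) :
    lprod (p u) x = 0 := by
  have h1 : HasDerivAt (fun t => (p t).1) x.1 u := hp.fst
  have h2 : HasDerivAt (fun t => (p t).2.1) x.2.1 u := hp.snd.fst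
  have h3 : HasDerivAt (fun t => (p t).2.2) x.2.2 u := hp.snd.snd
  have h := ((h1.mul h1).neg.add (h2.mul h2)).add (h3.mul h3)
  have hz : HasDerivAt (fun _ : ℝ => (0 : ℝ)) 0 u := hasDerivAt_const u 0
  have := (hz.congr_of_eventuallyEq (f₁ := fun t => lprod (p t) (p t)) h0).unique h
  simp only [lprod]
  linarith

/-- Velocities of a null curve at distinct nearby parameters are not orthogonal, provided the
derivative `x` of the velocity `p` is space-like at the base point. -/
lemma exists_lprod_ne_zero {p : ℝ → ℝ × ℝ × ℝ} {x : ℝ × ℝ × ℝ} {u : ℝ}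
    (hp : HasStrictDerivAt p x u) (hx : 0 < lprod x x)
    (h0 : ∀ᶠ t in nhds u, lprod (p t) (p t) = 0) :
    ∃ δ > 0, ∀ s t : ℝ, |s - u| < δ → |t - u| < δ → s ≠ t → lprod (p s) (p t) ≠ 0 := by
  have hc : Continuous fun w : ℝ × ℝ × ℝ => lprod w w := by
    unfold lprod; fun_prop
  obtain ⟨r, hr, hball⟩ := Metric.eventually_nhds_iff.1
    (hc.continuousAt.eventually (lt_mem_nhds hx))
  have hlo := hp.hasStrictFDerivAt.isLittleO.def (half_pos hr)
  obtain ⟨d, hd, hd'⟩ := Metric.eventually_nhds_iff.1 h0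
  obtain ⟨e, he, he'⟩ := Metric.eventually_nhds_iff.1 hlo
  refine ⟨min d e, lt_min hd he, fun s t hs ht hst hL => ?_⟩
  have hs0 := hd' (y := s) (by rw [Real.dist_eq]; exact hs.trans_le (min_le_left _ _))
  have ht0 := hd' (y := t) (by rw [Real.dist_eq]; exact ht.trans_le (min_le_left _ _))
  have hb := he' (y := (s, t)) (by
    rw [Prod.dist_eq, Real.dist_eq, Real.dist_eq]
    exact max_lt (hs.trans_le (min_le_right _ _)) (ht.trans_le (min_le_right _ _)))
  simp only [ContinuousLinearMap.toSpanSingleton_apply] at hb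
  have hne : s - t ≠ 0 := sub_ne_zero.2 hst
  have hw : dist ((s - t)⁻¹ • (p s - p t)) x < r := by
    have : (s - t)⁻¹ • (p s - p t) - x = (s - t)⁻¹ • (p s - p t - (s - t) • x) := by
      rw [smul_sub _ _ ((s - t) • x), smul_smul, inv_mul_cancel₀ hne, one_smul]
    rw [dist_eq_norm, this, norm_smul, norm_inv]
    have hpos : 0 < ‖s - t‖ := norm_pos_iff.2 hne
    calc ‖s - t‖⁻¹ * ‖p s - p t - (s - t) • x‖ ≤ ‖s - t‖⁻¹ * (r / 2 * ‖s - t‖) := by gcongr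
      _ = r / 2 := by field_simp
      _ < r := half_lt_self hr
  have hpos := hball hw
  have : lprod ((s - t)⁻¹ • (p s - p t)) ((s - t)⁻¹ • (p s - p t)) = 0 := by
    simp only [lprod, Prod.smul_fst, Prod.smul_snd, Prod.fst_sub, Prod.snd_sub, smul_eq_mul]
      at hs0 ht0 hL ⊢
    linear_combination ((s - t)⁻¹ ^ 2) * (hs0 + ht0 - 2 * hL)
  linarith

/-- for a C² null curve γ, Ψ(u,v) = (γ(u+v)+γ(u−v))/2 satisfies
    Ψ_uu = Ψ_vv, ⟨Ψ_u,Ψ_u⟩ = −⟨Ψ_v,Ψ_v⟩ = ½⟨γ'(u+v), γ'(u−v)⟩ and ⟨Ψ_u,Ψ_v⟩ = 0;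
    and near a non-degeneracy point u₀, for 0 < |v| small the induced metric has
    negative determinant (Ψ is time-like). -/
theorem stmt8 (a b : ℝ) (γ : ℝ → ℝ × ℝ × ℝ)
    (hγ : ContDiffOn ℝ 2 γ (Ioo a b))
    (hnull : ∀ t ∈ Ioo a b, lprod (deriv γ t) (deriv γ t) = 0 ∧ deriv γ t ≠ 0)
    (u₀ : ℝ) (hu₀ : u₀ ∈ Ioo a b)
    (hnd : ¬ ∃ c : ℝ, deriv (deriv γ) u₀ = c • deriv γ u₀) :
    (∀ q : ℝ × ℝ, q.1 + q.2 ∈ Ioo a b → q.1 - q.2 ∈ Ioo a b →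
      pd1 (pd1 (PsiOf γ)) q = pd2 (pd2 (PsiOf γ)) q ∧
      lprod (pd1 (PsiOf γ) q) (pd1 (PsiOf γ) q)
        = (1 / 2) * lprod (deriv γ (q.1 + q.2)) (deriv γ (q.1 - q.2)) ∧
      lprod (pd1 (PsiOf γ) q) (pd1 (PsiOf γ) q)
        = - lprod (pd2 (PsiOf γ) q) (pd2 (PsiOf γ) q) ∧
      lprod (pd1 (PsiOf γ) q) (pd2 (PsiOf γ) q) = 0) ∧
    ∃ ε > 0, ∀ u v : ℝ, |u - u₀| < ε → 0 < |v| → |v| < ε →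
      u + v ∈ Ioo a b ∧ u - v ∈ Ioo a b ∧
      lprod (pd1 (PsiOf γ) (u, v)) (pd1 (PsiOf γ) (u, v))
          * lprod (pd2 (PsiOf γ) (u, v)) (pd2 (PsiOf γ) (u, v))
        - (lprod (pd1 (PsiOf γ) (u, v)) (pd2 (PsiOf γ) (u, v))) ^ 2 < 0 := by
  have hopen : IsOpen (Ioo a b) := isOpen_Ioo
  have hd : ∀ t ∈ Ioo a b, HasDerivAt γ (deriv γ t) t := fun t ht =>
    ((hγ.contDiffAt (hopen.mem_nhds ht)).differentiableAt (by norm_num)).hasDerivAt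
  have hC1 : ContDiffOn ℝ 1 (deriv γ) (Ioo a b) :=
    hγ.deriv_of_isOpen hopen (by norm_num [one_add_one_eq_two])
  have hsd : ∀ t ∈ Ioo a b, HasStrictDerivAt (deriv γ) (deriv (deriv γ) t) t := fun t ht =>
    (hC1.contDiffAt (hopen.mem_nhds ht)).hasStrictDerivAt (by norm_num)
  have hpd : ∀ q : ℝ × ℝ, q.1 + q.2 ∈ Ioo a b → q.1 - q.2 ∈ Ioo a b →
      pd1 (PsiOf γ) q = (2⁻¹ : ℝ) • (deriv γ (q.1 + q.2) + deriv γ (q.1 - q.2)) ∧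
      pd2 (PsiOf γ) q = (2⁻¹ : ℝ) • (deriv γ (q.1 + q.2) - deriv γ (q.1 - q.2)) :=
    fun q h1 h2 => pd_split (Filter.Eventually.of_forall fun _ => rfl) (hd _ h1) (hd _ h2)
  have main : ∀ q : ℝ × ℝ, q.1 + q.2 ∈ Ioo a b → q.1 - q.2 ∈ Ioo a b →
      pd1 (pd1 (PsiOf γ)) q = pd2 (pd2 (PsiOf γ)) q ∧
      lprod (pd1 (PsiOf γ) q) (pd1 (PsiOf γ) q)
        = (1 / 2) * lprod (deriv γ (q.1 + q.2)) (deriv γ (q.1 - q.2)) ∧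
      lprod (pd1 (PsiOf γ) q) (pd1 (PsiOf γ) q)
        = - lprod (pd2 (PsiOf γ) q) (pd2 (PsiOf γ) q) ∧
      lprod (pd1 (PsiOf γ) q) (pd2 (PsiOf γ) q) = 0 := by
    intro q h1 h2
    have n1 := (hnull _ h1).1
    have n2 := (hnull _ h2).1
    refine ⟨?_, ?_⟩
    · have hnear : ∀ᶠ r : ℝ × ℝ in nhds q, r.1 + r.2 ∈ Ioo a b ∧ r.1 - r.2 ∈ Ioo a b :=
        ((continuous_fst.add continuous_snd).continuousAt.eventually (hopen.mem_nhds h1)).and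
          ((continuous_fst.sub continuous_snd).continuousAt.eventually (hopen.mem_nhds h2))
      have e1 := (pd_split (F := pd1 (PsiOf γ)) (f := deriv γ) (g := deriv γ)
        (hnear.mono fun r hr => (hpd r hr.1 hr.2).1)
        (hsd _ h1).hasDerivAt (hsd _ h2).hasDerivAt).1
      have e2 := (pd_split (F := pd2 (PsiOf γ)) (f := deriv γ) (g := fun t => -deriv γ t)
        (hnear.mono fun r hr => by
          simpa only [sub_eq_add_neg] using (hpd r hr.1 hr.2).2)
        (hsd _ h1).hasDerivAt (hsd _ h2).hasDerivAt.neg).2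
      rw [e1, e2, sub_neg_eq_add]
    · rw [(hpd q h1 h2).1, (hpd q h1 h2).2]
      simp only [lprod, Prod.smul_fst, Prod.smul_snd, Prod.fst_sub, Prod.snd_sub, Prod.fst_add,
        Prod.snd_add, smul_eq_mul] at n1 n2 ⊢
      refine ⟨?_, ?_, ?_⟩
      · linear_combination (1 / 4) * n1 + (1 / 4) * n2
      · linear_combination (1 / 2) * n1 + (1 / 2) * n2
      · linear_combination (1 / 4) * n1 - (1 / 4) * n2
  refine ⟨main, ?_⟩
  have h0 : ∀ᶠ t in nhds u₀, lprod (deriv γ t) (deriv γ t) = 0 :=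
    (hopen.eventually_mem hu₀).mono fun t ht => (hnull t ht).1
  have hpos : 0 < lprod (deriv (deriv γ) u₀) (deriv (deriv γ) u₀) :=
    lprod_self_pos (hnull u₀ hu₀).1 (hnull u₀ hu₀).2
      (lprod_deriv_eq_zero_s8 (hsd u₀ hu₀).hasDerivAt h0) hnd
  obtain ⟨δ, hδ, hne⟩ := exists_lprod_ne_zero (hsd u₀ hu₀) hpos h0
  obtain ⟨e, he, hmem⟩ := Metric.isOpen_iff.1 hopen u₀ hu₀
  -- Halving makes both `u + v` and `u - v` lie within `min δ e` of `u₀`.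
  refine ⟨min δ e / 2, half_pos (lt_min hδ he), fun u v hu hv0 hv => ?_⟩
  have hp : |u + v - u₀| < min δ e := by
    rw [abs_lt] at *; constructor <;> linarith [hu.1, hu.2, hv.1, hv.2]
  have hm : |u - v - u₀| < min δ e := by
    rw [abs_lt] at *; constructor <;> linarith [hu.1, hu.2, hv.1, hv.2]
  have m1 : u + v ∈ Ioo a b := hmem (by
    rw [Metric.mem_ball, Real.dist_eq]; exact hp.trans_le (min_le_right _ _))
  have m2 : u - v ∈ Ioo a b := hmem (by
    rw [Metric.mem_ball, Real.dist_eq]; exact hm.trans_le (min_le_right _ _))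
  refine ⟨m1, m2, ?_⟩
  have hL := hne (u + v) (u - v) (hp.trans_le (min_le_left _ _)) (hm.trans_le (min_le_left _ _))
    (fun h => abs_pos.1 hv0 (by linarith))
  obtain ⟨-, hE, hG, hF⟩ := main (u, v) m1 m2
  simp only at hE
  have hG' : lprod (pd2 (PsiOf γ) (u, v)) (pd2 (PsiOf γ) (u, v))
      = -((1 / 2) * lprod (deriv γ (u + v)) (deriv γ (u - v))) := by linarith
  rw [hF, hE, hG']
  have : 0 < lprod (deriv γ (u + v)) (deriv γ (u - v)) ^ 2 := by positivity
  nlinarith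
end

section
/- The function f : ℝ² → ℝ, f(x, y) = y tanh x, satisfies the zero mean curvature equation (1 − f_y²) f_xx + 2 f_x f_y f_xy + (1 − f_x²) f_yy = 0 on all of ℝ². Moreover, with B := 1 − f_x² − f_y², one has B(x, y) = sech⁴(x) · (cosh²x − y²); hence B = 0 exactly on the two disjoint curves y = cosh x and y = −cosh x, B > 0 (graph space-like) for |y| < cosh x, B < 0 (graph time-like) for |y| > cosh x, and every point with B = 0 is a non-degenerate point of type change, i.e. ∇B ≠ 0 there. -/
/-!
The partial derivatives of `f = y tanh x` are computed from one-variable slices: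
`f_x = y sech² x`, `f_y = tanh x`, `f_xx = -2 y sinh x / cosh³ x`, `f_xy = sech² x`, `f_yy = 0`.
With `1 - tanh² = sech²` the zero mean curvature equation and the formula
`B = sech⁴ x (cosh² x - y²)` are algebraic identities. Since `sech⁴ x > 0`, the sign of `B` is
that of `cosh² x - y²`. Finally `B_y = -2 y sech⁴ x`, which does not vanish on `y = ± cosh x`;
so the second component of `∇B` alone gives non-degeneracy.
-/

open Set

/-- Kobayashi's entire zero mean curvature graph C₀ : f(x,y) = y tanh x. -/
noncomputable def f10 : ℝ × ℝ → ℝ := fun q => q.2 * Real.tanh q.1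

/-- For a differentiable function, `pd1` is the ordinary derivative of the horizontal slice. -/
lemma pd1_eq_of_slice {F : ℝ × ℝ → ℝ} {q : ℝ × ℝ} {d : ℝ} (hF : DifferentiableAt ℝ F q)
    (hd : HasDerivAt (fun x => F (x, q.2)) d q.1) : pd1 F q = d := by
  have h1 : HasDerivAt (fun x : ℝ => (x, q.2)) ((1 : ℝ), (0 : ℝ)) q.1 :=
    (hasDerivAt_id q.1).prodMk (hasDerivAt_const q.1 q.2)
  have h2 : HasDerivAt (fun x => F (x, q.2)) (fderiv ℝ F q (1, 0)) q.1 :=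
    HasFDerivAt.comp_hasDerivAt (l := F) q.1 hF.hasFDerivAt h1
  exact h2.unique hd

/-- For a differentiable function, `pd2` is the ordinary derivative of the vertical slice. -/
lemma pd2_eq_of_slice {F : ℝ × ℝ → ℝ} {q : ℝ × ℝ} {d : ℝ} (hF : DifferentiableAt ℝ F q)
    (hd : HasDerivAt (fun y => F (q.1, y)) d q.2) : pd2 F q = d := by
  have h1 : HasDerivAt (fun y : ℝ => (q.1, y)) ((0 : ℝ), (1 : ℝ)) q.2 :=
    (hasDerivAt_const q.2 q.1).prodMk (hasDerivAt_id q.2)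
  have h2 : HasDerivAt (fun y => F (q.1, y)) (fderiv ℝ F q (0, 1)) q.2 :=
    HasFDerivAt.comp_hasDerivAt (l := F) q.2 hF.hasFDerivAt h1
  exact h2.unique hd

lemma cosh_ne_zero' (x : ℝ) : Real.cosh x ≠ 0 := (Real.cosh_pos x).ne'

lemma f10_eq : f10 = fun q => q.2 * (Real.sinh q.1 / Real.cosh q.1) := by
  funext q
  simp only [f10, Real.tanh_eq_sinh_div_cosh]

lemma hasDerivAt_sinh_div_cosh (x : ℝ) :
    HasDerivAt (fun x => Real.sinh x / Real.cosh x) ((Real.cosh x ^ 2)⁻¹) x := by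
  refine ((Real.hasDerivAt_sinh x).fun_div (Real.hasDerivAt_cosh x)
    (cosh_ne_zero' x)).congr_deriv ?_
  have h := Real.cosh_sq x
  have h0 := cosh_ne_zero' x
  field_simp
  linarith

lemma hasDerivAt_inv_cosh_sq (x : ℝ) :
    HasDerivAt (fun x => (Real.cosh x ^ 2)⁻¹) (-2 * Real.sinh x / Real.cosh x ^ 3) x := by
  have h0 := cosh_ne_zero' x
  refine (((Real.hasDerivAt_cosh x).fun_pow 2).fun_inv (pow_ne_zero 2 h0)).congr_deriv ?_
  field_simp
  norm_num
  ring

lemma pd1_f10 : pd1 f10 = fun q => q.2 * (Real.cosh q.1 ^ 2)⁻¹ := by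
  funext q
  rw [f10_eq]
  refine pd1_eq_of_slice ?_ ((hasDerivAt_sinh_div_cosh q.1).const_mul q.2)
  fun_prop (disch := exact cosh_ne_zero' _)

lemma pd2_f10 : pd2 f10 = fun q => Real.sinh q.1 / Real.cosh q.1 := by
  funext q
  rw [f10_eq]
  refine pd2_eq_of_slice ?_ ?_
  · fun_prop (disch := exact cosh_ne_zero' _)
  · simpa using (hasDerivAt_id q.2).mul_const (Real.sinh q.1 / Real.cosh q.1)

lemma differentiableAt_pd1_formula (q : ℝ × ℝ) :
    DifferentiableAt ℝ (fun q : ℝ × ℝ => q.2 * (Real.cosh q.1 ^ 2)⁻¹) q := by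
  fun_prop (disch := exact pow_ne_zero 2 (cosh_ne_zero' _))

lemma pd1_pd1_f10 (q : ℝ × ℝ) :
    pd1 (pd1 f10) q = q.2 * (-2 * Real.sinh q.1 / Real.cosh q.1 ^ 3) := by
  rw [pd1_f10]
  exact pd1_eq_of_slice (differentiableAt_pd1_formula q)
    ((hasDerivAt_inv_cosh_sq q.1).const_mul q.2)

lemma pd2_pd1_f10 (q : ℝ × ℝ) : pd2 (pd1 f10) q = (Real.cosh q.1 ^ 2)⁻¹ := by
  rw [pd1_f10]
  refine pd2_eq_of_slice (differentiableAt_pd1_formula q) ?_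
  simpa using (hasDerivAt_id q.2).mul_const ((Real.cosh q.1 ^ 2)⁻¹)

lemma pd2_pd2_f10 (q : ℝ × ℝ) : pd2 (pd2 f10) q = 0 := by
  rw [pd2_f10]
  refine pd2_eq_of_slice ?_ (hasDerivAt_const q.2 (Real.sinh q.1 / Real.cosh q.1))
  fun_prop (disch := exact cosh_ne_zero' _)

lemma zmcAt_f10 (q : ℝ × ℝ) : ZMCAt f10 q := by
  have h0 := cosh_ne_zero' q.1
  have h := Real.cosh_sq q.1
  rw [ZMCAt, pd1_pd1_f10, pd2_pd1_f10, pd2_pd2_f10, pd1_f10, pd2_f10]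
  -- `1 - f_y² = sech² x`, after which the first two terms cancel.
  have hB : 1 - (Real.sinh q.1 / Real.cosh q.1) ^ 2 = (Real.cosh q.1 ^ 2)⁻¹ := by
    field_simp
    linarith
  simp only [hB]
  field_simp
  ring

lemma Bfun_f10 (q : ℝ × ℝ) :
    Bfun f10 q = ((Real.cosh q.1)⁻¹) ^ 4 * ((Real.cosh q.1) ^ 2 - q.2 ^ 2) := by
  have h0 := cosh_ne_zero' q.1
  have h : Real.sinh q.1 ^ 2 = Real.cosh q.1 ^ 2 - 1 := Real.sinh_sq q.1
  rw [Bfun, pd1_f10, pd2_f10]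
  simp only [div_pow, h]
  field_simp
  ring

lemma pd2_Bfun_f10 (q : ℝ × ℝ) :
    pd2 (Bfun f10) q = ((Real.cosh q.1)⁻¹) ^ 4 * (-(2 * q.2)) := by
  rw [funext Bfun_f10]
  refine pd2_eq_of_slice ?_ ?_
  · fun_prop (disch := exact cosh_ne_zero' _)
  · simpa [-inv_pow] using (((hasDerivAt_id q.2).pow 2).const_sub (Real.cosh q.1 ^ 2)).const_mul
      (((Real.cosh q.1)⁻¹) ^ 4)

lemma Bfun_f10_eq_zero_iff (q : ℝ × ℝ) :
    Bfun f10 q = 0 ↔ q.2 = Real.cosh q.1 ∨ q.2 = -Real.cosh q.1 := by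
  have h0 := cosh_ne_zero' q.1
  rw [Bfun_f10, mul_eq_zero, or_iff_right (pow_ne_zero 4 (inv_ne_zero h0)), sub_eq_zero,
    eq_comm, sq_eq_sq_iff_eq_or_eq_neg]

/-- f(x,y) = y tanh x satisfies the ZMC equation everywhere;
    B = sech⁴x (cosh²x − y²); B = 0 exactly on y = ± cosh x; B > 0 for |y| < cosh x,
    B < 0 for |y| > cosh x; and ∇B ≠ 0 wherever B = 0. -/
theorem stmt10 :
    (∀ q : ℝ × ℝ, ZMCAt f10 q) ∧
    (∀ q : ℝ × ℝ, Bfun f10 q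
      = ((Real.cosh q.1)⁻¹) ^ 4 * ((Real.cosh q.1) ^ 2 - q.2 ^ 2)) ∧
    (∀ q : ℝ × ℝ, (Bfun f10 q = 0 ↔ q.2 = Real.cosh q.1 ∨ q.2 = -Real.cosh q.1)) ∧
    (∀ q : ℝ × ℝ, |q.2| < Real.cosh q.1 → 0 < Bfun f10 q) ∧
    (∀ q : ℝ × ℝ, Real.cosh q.1 < |q.2| → Bfun f10 q < 0) ∧
    (∀ q : ℝ × ℝ, Bfun f10 q = 0 → (pd1 (Bfun f10) q, pd2 (Bfun f10) q) ≠ (0, 0)) := by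
  refine ⟨zmcAt_f10, Bfun_f10, Bfun_f10_eq_zero_iff, fun q hq => ?_, fun q hq => ?_,
    fun q hq hgrad => ?_⟩
  · have hc := Real.cosh_pos q.1
    rw [Bfun_f10]
    refine mul_pos (by positivity) (sub_pos.2 (sq_lt_sq.2 ?_))
    rwa [abs_of_pos hc]
  · have hc := Real.cosh_pos q.1
    rw [Bfun_f10]
    refine mul_neg_of_pos_of_neg (by positivity) (sub_neg.2 (sq_lt_sq.2 ?_))
    rwa [abs_of_pos hc]
  · have h0 := cosh_ne_zero' q.1
    have hy : q.2 ≠ 0 := by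
      rcases (Bfun_f10_eq_zero_iff q).1 hq with h | h <;> rw [h]
      · exact h0
      · exact neg_ne_zero.2 h0
    have h2 : pd2 (Bfun f10) q = 0 := congrArg Prod.snd hgrad
    rw [pd2_Bfun_f10] at h2
    exact mul_ne_zero (pow_ne_zero 4 (inv_ne_zero h0))
      (neg_ne_zero.2 (mul_ne_zero two_ne_zero hy)) h2
end

section
/- The function f : ℝ² → ℝ, f(x, y) = log(cosh y) − log(cosh x), satisfies the zero mean curvature equation (1 − f_y²) f_xx + 2 f_x f_y f_xy + (1 − f_x²) f_yy = 0 on all of ℝ². Moreover, with B := 1 − f_x² − f_y² = 1 − tanh²x − tanh²y, every point (x, y) with B(x, y) = 0 is a non-degenerate point of type change, i.e. ∇B(x, y) ≠ 0 there. -/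
/-!
The function `f11` separates variables, `f11 (x, y) = -log (cosh x) + log (cosh y)`, so every
partial derivative reduces to a one-variable derivative (`hasFDerivAt_separated`). With
`a = tanh x` and `b = tanh y` this gives `f_x = -a`, `f_y = b`, `f_xx = -(1 - a²)`, `f_xy = 0` and
`f_yy = 1 - b²`; the two surviving terms of the zero mean curvature equation cancel.

Likewise `∇B = (-2a(1 - a²), -2b(1 - b²))`. Since `|tanh| < 1`, this vanishes only if `a = b = 0`,
where `B = 1 ≠ 0`.
-/

open Set

/-- The entire zero mean curvature graph S₀ : f(x,y) = log(cosh y) − log(cosh x). -/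
noncomputable def f11 : ℝ × ℝ → ℝ :=
  fun q => Real.log (Real.cosh q.2) - Real.log (Real.cosh q.1)

lemma hasDerivAt_log_cosh (x : ℝ) :
    HasDerivAt (fun x => Real.log (Real.cosh x)) (Real.tanh x) x := by
  rw [Real.tanh_eq_sinh_div_cosh]
  exact (Real.hasDerivAt_cosh x).log (Real.cosh_pos x).ne'

lemma hasDerivAt_tanh (x : ℝ) : HasDerivAt Real.tanh (1 - Real.tanh x ^ 2) x := by
  have hc := (Real.cosh_pos x).ne'
  have h := (Real.hasDerivAt_sinh x).div (Real.hasDerivAt_cosh x) hc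
  have e : Real.tanh = Real.sinh / Real.cosh := by
    funext y
    simp [Real.tanh_eq_sinh_div_cosh]
  rw [← e] at h
  refine h.congr_deriv ?_
  rw [Real.tanh_eq_sinh_div_cosh]
  field_simp

lemma one_sub_tanh_sq_pos (x : ℝ) : 0 < 1 - Real.tanh x ^ 2 := by
  have hc := Real.cosh_pos x
  have e : 1 - Real.tanh x ^ 2 = 1 / Real.cosh x ^ 2 := by
    rw [Real.tanh_eq_sinh_div_cosh]
    field_simp
    linarith [Real.cosh_sq x]
  rw [e]
  positivity

lemma hasFDerivAt_separated {g h : ℝ → ℝ} {g' h' : ℝ} {q : ℝ × ℝ}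
    (hg : HasDerivAt g g' q.1) (hh : HasDerivAt h h' q.2) :
    HasFDerivAt (fun p : ℝ × ℝ => g p.1 + h p.2)
      (g' • ContinuousLinearMap.fst ℝ ℝ ℝ + h' • ContinuousLinearMap.snd ℝ ℝ ℝ) q :=
  (hg.comp_hasFDerivAt q hasFDerivAt_fst).add (hh.comp_hasFDerivAt q hasFDerivAt_snd)

lemma pd1_separated {g h : ℝ → ℝ} {g' h' : ℝ} {q : ℝ × ℝ}
    (hg : HasDerivAt g g' q.1) (hh : HasDerivAt h h' q.2) :
    pd1 (fun p : ℝ × ℝ => g p.1 + h p.2) q = g' := by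
  simp [pd1, (hasFDerivAt_separated hg hh).fderiv]

lemma pd2_separated {g h : ℝ → ℝ} {g' h' : ℝ} {q : ℝ × ℝ}
    (hg : HasDerivAt g g' q.1) (hh : HasDerivAt h h' q.2) :
    pd2 (fun p : ℝ × ℝ => g p.1 + h p.2) q = h' := by
  simp [pd2, (hasFDerivAt_separated hg hh).fderiv]

lemma f11_eq : f11 = fun p : ℝ × ℝ => -Real.log (Real.cosh p.1) + Real.log (Real.cosh p.2) := by
  funext p
  simp only [f11]
  ring

lemma pd1_f11 : pd1 f11 = fun p : ℝ × ℝ => -Real.tanh p.1 + 0 := by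
  funext q
  rw [f11_eq, add_zero]
  exact pd1_separated (hasDerivAt_log_cosh q.1).neg (hasDerivAt_log_cosh q.2)

lemma pd2_f11 : pd2 f11 = fun p : ℝ × ℝ => 0 + Real.tanh p.2 := by
  funext q
  rw [f11_eq, zero_add]
  exact pd2_separated (hasDerivAt_log_cosh q.1).neg (hasDerivAt_log_cosh q.2)

lemma Bfun_f11 : Bfun f11 = fun p : ℝ × ℝ => (1 - Real.tanh p.1 ^ 2) + -Real.tanh p.2 ^ 2 := by
  funext q
  simp only [Bfun, pd1_f11, pd2_f11]
  ring

/-- f(x,y) = log(cosh y) − log(cosh x) satisfies the ZMC equation everywhere;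
    B = 1 − tanh²x − tanh²y; and every point with B = 0 is a non-degenerate point of
    type change (∇B ≠ 0). -/
theorem stmt11 :
    (∀ q : ℝ × ℝ, ZMCAt f11 q) ∧
    (∀ q : ℝ × ℝ, Bfun f11 q = 1 - (Real.tanh q.1) ^ 2 - (Real.tanh q.2) ^ 2) ∧
    (∀ q : ℝ × ℝ, Bfun f11 q = 0 → (pd1 (Bfun f11) q, pd2 (Bfun f11) q) ≠ (0, 0)) := by
  refine ⟨fun q => ?_, fun q => ?_, fun q hB hgrad => ?_⟩
  · have hxx : pd1 (pd1 f11) q = -(1 - Real.tanh q.1 ^ 2) := by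
      rw [pd1_f11]
      exact pd1_separated (hasDerivAt_tanh q.1).neg (hasDerivAt_const q.2 (0 : ℝ))
    have hxy : pd2 (pd1 f11) q = 0 := by
      rw [pd1_f11]
      exact pd2_separated (hasDerivAt_tanh q.1).neg (hasDerivAt_const q.2 (0 : ℝ))
    have hyy : pd2 (pd2 f11) q = 1 - Real.tanh q.2 ^ 2 := by
      rw [pd2_f11]
      exact pd2_separated (hasDerivAt_const q.1 (0 : ℝ)) (hasDerivAt_tanh q.2)
    simp only [ZMCAt, hxx, hxy, hyy]
    simp only [pd1_f11, pd2_f11]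
    ring
  · simp only [Bfun_f11]
    ring
  · have dx := ((hasDerivAt_tanh q.1).pow 2).const_sub 1
    have dy := ((hasDerivAt_tanh q.2).pow 2).neg
    have hx := pd1_separated dx dy
    have hy := pd2_separated dx dy
    simp only [Pi.pow_apply, Pi.neg_apply, ← Bfun_f11] at hx hy
    rw [Prod.mk.injEq, hx, hy] at hgrad
    have ha : Real.tanh q.1 = 0 := by
      simpa [(one_sub_tanh_sq_pos q.1).ne'] using hgrad.1
    have hb : Real.tanh q.2 = 0 := by
      simpa [(one_sub_tanh_sq_pos q.2).ne'] using hgrad.2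
    simp [Bfun_f11, ha, hb] at hB
end

section
/- For all u, v ∈ ℝ, the point (t, x, y) := ((sinh u − sinh v)/2, (u − v)/2, (cosh u + cosh v)/2) satisfies t = y tanh x. That is, the image of the conjugate φ₂*(u,v) = (1/2)(sinh u − sinh v, u − v, cosh u + cosh v) of the time-like hyperbolic catenoid parametrization is contained in the entire zero mean curvature graph C₀ = {(t,x,y) : t = y tanh x}. -/
/-- the conjugate φ₂*(u,v) = ½(sinh u − sinh v, u − v, cosh u + cosh v) of the
    time-like hyperbolic catenoid lies in Kobayashi's entire zero mean curvature graph
    C₀ = {t = y tanh x}. -/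
theorem stmt12 (u v : ℝ) :
    (Real.sinh u - Real.sinh v) / 2
      = ((Real.cosh u + Real.cosh v) / 2) * Real.tanh ((u - v) / 2) := by
  -- With a = (u + v)/2 and b = (u - v)/2, the addition formulas turn the two half-sums into
  -- cosh a * sinh b and cosh a * cosh b, whose quotient is tanh b.
  obtain ⟨a, b, rfl, rfl⟩ : ∃ a b : ℝ, u = a + b ∧ v = a - b :=
    ⟨(u + v) / 2, (u - v) / 2, by ring, by ring⟩
  have hb : (a + b - (a - b)) / 2 = b := by ring
  have hc : Real.cosh b ≠ 0 := (Real.cosh_pos b).ne'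
  rw [hb, Real.tanh_eq_sinh_div_cosh, Real.sinh_add, Real.sinh_sub, Real.cosh_add,
    Real.cosh_sub]
  field_simp
  ring
end

section
/- For all u, v ∈ (0, π/2), define t := (1/2)(log(cot u) − log(cot v)), x := (1/4)(log((1−cos u)/(1+cos u)) − log((1−cos v)/(1+cos v))), and y := (1/4)(log((1+sin u)/(1−sin u)) − log((1+sin v)/(1−sin v))). Then the identities cosh t = sin(u+v)/√(sin 2u · sin 2v), cosh x = sin((u+v)/2)/√(sin u · sin v), and cosh y = cos((u+v)/2)/√(cos u · cos v) hold. (These are the identities showing that the conjugate of the time-like Scherk surface of the first kind lies on the entire zero mean curvature graph S₀.) -/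
/-!
All three identities are instances of one: for `a, b ∈ (0, π/2)`,
`cosh (½ (log cot a - log cot b)) = sin (a + b) / √(sin 2a · sin 2b)` (`cosh_half_log_cot`).
This holds because the argument equals `½ (log A - log B)` with `A = cos a sin b` and
`B = sin a cos b`, and `cosh (½ (log A - log B)) = (A + B) / (2 √(A B))`.

The identity for `t` is the case `(a, b) = (u, v)`. Since `(1 - cos u) / (1 + cos u) = cot⁻² (u/2)`,
the one for `x` is the case `(u/2, v/2)`, up to the evenness of `cosh`. Since
`(1 + sin u) / (1 - sin u) = cot² (π/4 - u/2)`, the one for `y` is the case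
`(π/4 - u/2, π/4 - v/2)`.
-/

open Set Real

lemma cosh_half_log_sub_log {A B : ℝ} (hA : 0 < A) (hB : 0 < B) :
    Real.cosh ((1 / 2) * (Real.log A - Real.log B)) = (A + B) / (2 * Real.sqrt (A * B)) := by
  have h : (1 / 2) * (Real.log A - Real.log B) = Real.log (√A / √B) := by
    rw [Real.log_div (by positivity) (by positivity), Real.log_sqrt hA.le, Real.log_sqrt hB.le]
    ring
  rw [h, Real.cosh_log (by positivity), Real.sqrt_mul hA.le]
  have h1 : √A ≠ 0 := by positivity
  have h2 : √B ≠ 0 := by positivity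
  field_simp
  rw [Real.sq_sqrt hA.le, Real.sq_sqrt hB.le]

lemma cosh_half_log_cot {a b : ℝ} (ha : a ∈ Ioo 0 (π / 2)) (hb : b ∈ Ioo 0 (π / 2)) :
    Real.cosh ((1 / 2) * (Real.log (Real.cos a / Real.sin a)
        - Real.log (Real.cos b / Real.sin b)))
      = Real.sin (a + b) / Real.sqrt (Real.sin (2 * a) * Real.sin (2 * b)) := by
  have hsa : 0 < Real.sin a := Real.sin_pos_of_pos_of_lt_pi ha.1 (by linarith [ha.2, Real.pi_pos])
  have hsb : 0 < Real.sin b := Real.sin_pos_of_pos_of_lt_pi hb.1 (by linarith [hb.2, Real.pi_pos])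
  have hca : 0 < Real.cos a := Real.cos_pos_of_mem_Ioo ⟨by linarith [ha.1, Real.pi_pos], ha.2⟩
  have hcb : 0 < Real.cos b := Real.cos_pos_of_mem_Ioo ⟨by linarith [hb.1, Real.pi_pos], hb.2⟩
  have hlog : Real.log (Real.cos a / Real.sin a) - Real.log (Real.cos b / Real.sin b)
      = Real.log (Real.cos a * Real.sin b) - Real.log (Real.sin a * Real.cos b) := by
    rw [Real.log_div hca.ne' hsa.ne', Real.log_div hcb.ne' hsb.ne',
      Real.log_mul hca.ne' hsb.ne', Real.log_mul hsa.ne' hcb.ne']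
    ring
  have hden : Real.sin (2 * a) * Real.sin (2 * b)
      = 2 ^ 2 * (Real.cos a * Real.sin b * (Real.sin a * Real.cos b)) := by
    rw [Real.sin_two_mul, Real.sin_two_mul]
    ring
  rw [hlog, cosh_half_log_sub_log (by positivity) (by positivity), hden,
    Real.sqrt_mul (x := 2 ^ 2) (by positivity), Real.sqrt_sq (by norm_num), Real.sin_add]
  ring

/-- Half-angle formula `(1 + cos 2a) / (1 - cos 2a) = cot² a`, after taking logarithms. -/
lemma log_one_add_cos_div (a : ℝ) :
    Real.log ((1 + Real.cos (2 * a)) / (1 - Real.cos (2 * a)))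
      = 2 * Real.log (Real.cos a / Real.sin a) := by
  have h1 : 1 + Real.cos (2 * a) = 2 * Real.cos a ^ 2 := by rw [Real.cos_two_mul]; ring
  have h2 : 1 - Real.cos (2 * a) = 2 * Real.sin a ^ 2 := by
    rw [Real.cos_two_mul, Real.sin_sq]; ring
  rw [h1, h2, mul_div_mul_left _ _ two_ne_zero, ← div_pow, Real.log_pow]
  norm_num

/-- the identities showing that the conjugate of the time-like Scherk surface
    of the first kind lies on the entire zero mean curvature graph S₀. For u, v ∈ (0, π/2),
    with t = ½(log cot u − log cot v), x = ¼(log((1−cos u)/(1+cos u)) − log((1−cos v)/(1+cos v))),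
    y = ¼(log((1+sin u)/(1−sin u)) − log((1+sin v)/(1−sin v))):
    cosh t = sin(u+v)/√(sin 2u sin 2v), cosh x = sin((u+v)/2)/√(sin u sin v),
    cosh y = cos((u+v)/2)/√(cos u cos v). -/
theorem stmt13 (u v : ℝ) (hu : u ∈ Ioo 0 (π / 2)) (hv : v ∈ Ioo 0 (π / 2)) :
    Real.cosh ((1 / 2) * (Real.log (Real.cos u / Real.sin u)
        - Real.log (Real.cos v / Real.sin v)))
      = Real.sin (u + v) / Real.sqrt (Real.sin (2 * u) * Real.sin (2 * v)) ∧
    Real.cosh ((1 / 4) * (Real.log ((1 - Real.cos u) / (1 + Real.cos u))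
        - Real.log ((1 - Real.cos v) / (1 + Real.cos v))))
      = Real.sin ((u + v) / 2) / Real.sqrt (Real.sin u * Real.sin v) ∧
    Real.cosh ((1 / 4) * (Real.log ((1 + Real.sin u) / (1 - Real.sin u))
        - Real.log ((1 + Real.sin v) / (1 - Real.sin v))))
      = Real.cos ((u + v) / 2) / Real.sqrt (Real.cos u * Real.cos v) := by
  obtain ⟨hu0, hu1⟩ := hu
  obtain ⟨hv0, hv1⟩ := hv
  refine ⟨cosh_half_log_cot ⟨hu0, hu1⟩ ⟨hv0, hv1⟩, ?_, ?_⟩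
  · have key := cosh_half_log_cot (a := u / 2) (b := v / 2)
      ⟨by linarith, by linarith⟩ ⟨by linarith, by linarith⟩
    have h (w : ℝ) : Real.log ((1 - Real.cos w) / (1 + Real.cos w))
        = -(2 * Real.log (Real.cos (w / 2) / Real.sin (w / 2))) := by
      rw [← log_one_add_cos_div, ← Real.log_inv, inv_div, mul_div_cancel₀ w two_ne_zero]
    rw [mul_div_cancel₀ u two_ne_zero, mul_div_cancel₀ v two_ne_zero, ← add_div] at key
    rw [h, h, ← key, ← Real.cosh_neg]
    congr 1
    ring
  · have key := cosh_half_log_cot (a := π / 4 - u / 2) (b := π / 4 - v / 2)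
      ⟨by linarith, by linarith⟩ ⟨by linarith, by linarith⟩
    have h2 (w : ℝ) : 2 * (π / 4 - w / 2) = π / 2 - w := by ring
    have h (w : ℝ) : Real.log ((1 + Real.sin w) / (1 - Real.sin w))
        = 2 * Real.log (Real.cos (π / 4 - w / 2) / Real.sin (π / 4 - w / 2)) := by
      rw [← log_one_add_cos_div, h2, Real.cos_pi_div_two_sub]
    have hadd : π / 4 - u / 2 + (π / 4 - v / 2) = π / 2 - (u + v) / 2 := by ring
    rw [hadd, h2, h2, Real.sin_pi_div_two_sub, Real.sin_pi_div_two_sub,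
      Real.sin_pi_div_two_sub] at key
    rw [h, h, ← key]
    congr 1
    ring
end

section
/- Let c ∈ ℝ, c ≠ 0, let εsign ∈ {+1, −1}, and define F : ℝ³ → ℝ by F(t, x, y) = 12(x² − t²) − εsign·(x + t)⁴ + 12 y². Then F(−c, c, 0) = 0 and ∂F/∂t(−c, c, 0) = 24c ≠ 0, so by the implicit function theorem there exist a neighborhood W of (c, 0) in ℝ² and a C^∞ function τ : W → ℝ with τ(c, 0) = −c and F(τ(x, y), x, y) = 0 on W. Moreover, any such C² function τ satisfies ∂τ/∂y(c, 0) = 0 and ∂²τ/∂y²(c, 0) = −1/c ≠ 0. -/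
/-!
Everything happens near the point `(t, x, y) = (-c, c, 0)`, where `∂F/∂t = 24 c ≠ 0`.

Existence (`exists_smooth_graph`) is the implicit function theorem. It is applied in the analytic
class: analyticity at a point propagates to a neighbourhood, whereas Mathlib's `ContDiffAt` at
order `∞` only yields a neighbourhood for each finite order separately.

For the derivatives of a `C²` solution `τ`, put `g y = τ (c, y)`. Differentiating
`12 (c² - g²) - s (c + g)⁴ + 12 y² = 0` once gives
`-24 g g' - 4 s (c + g)³ g' + 24 y = 0` for all `y` near `0`, and once more at `y = 0`, where
`c + g = 0`, gives `24 c g'' + 24 = 0`.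
-/

open Set

open Filter Topology
open scoped ContDiff

/-- `pd2 f` is the ordinary derivative of `f` along vertical lines. -/
lemma hasDerivAt_pd2 {f : ℝ × ℝ → ℝ} {a b : ℝ} (hf : DifferentiableAt ℝ f (a, b)) :
    HasDerivAt (fun y => f (a, y)) (pd2 f (a, b)) b :=
  hf.hasFDerivAt.comp_hasDerivAt b ((hasDerivAt_const b a).prodMk (hasDerivAt_id b))

lemma exists_smooth_graph (c : ℝ) (hc : c ≠ 0) (s : ℝ) :
    ∃ W : Set (ℝ × ℝ), IsOpen W ∧ (c, 0) ∈ W ∧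
      ∃ τ : ℝ × ℝ → ℝ, ContDiffOn ℝ (⊤ : ℕ∞) τ W ∧ τ (c, 0) = -c ∧
        ∀ q ∈ W, 12 * (q.1 ^ 2 - τ q ^ 2) - s * (q.1 + τ q) ^ 4 + 12 * q.2 ^ 2 = 0 := by
  set f : (ℝ × ℝ) × ℝ → ℝ :=
    fun p => 12 * (p.1.1 ^ 2 - p.2 ^ 2) - s * (p.1.1 + p.2) ^ 4 + 12 * p.1.2 ^ 2 with hf
  set u : (ℝ × ℝ) × ℝ := ((c, 0), -c) with hu
  have hcd : ContDiffAt ℝ ω f u := by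
    have : ContDiff ℝ ω f := by fun_prop
    exact this.contDiffAt
  have hn : (ω : WithTop ℕ∞) ≠ 0 := by simp
  have hfu : f u = 0 := by simp [hf, hu]
  have hder : (fderiv ℝ f u ∘L .inr ℝ (ℝ × ℝ) ℝ) 1 = 24 * c := by
    have h1 : HasDerivAt (fun t : ℝ => f ((c, 0), t)) (fderiv ℝ f u (0, 1)) (-c) :=
      (hcd.differentiableAt hn).hasFDerivAt.comp_hasDerivAt (-c)
        ((hasDerivAt_const (-c) ((c, 0) : ℝ × ℝ)).prodMk (hasDerivAt_id (-c)))
    have hid := hasDerivAt_id (-c)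
    have h2 : HasDerivAt (fun t : ℝ => f ((c, 0), t)) (24 * c) (-c) := by
      convert! ((((hid.pow 2).const_sub (c ^ 2)).const_mul 12).sub
        (((hid.const_add c).pow 4).const_mul s)).add_const (12 * (0 : ℝ) ^ 2) using 1
      simp
      ring
    simpa using h1.unique h2
  have hinv : (fderiv ℝ f u ∘L .inr ℝ (ℝ × ℝ) ℝ).IsInvertible := by
    have h24 : (24 * c) ≠ 0 := by simpa using hc
    refine ⟨ContinuousLinearEquiv.unitsEquivAut ℝ (Units.mk0 _ h24), ?_⟩
    ext
    simpa using hder.symm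
  have hτ := hcd.contDiffAt_implicitFunction hn hinv
  have h0 := hcd.implicitFunction_apply_self hn hinv
  have hE := hcd.eventually_apply_implicitFunction hn hinv
  have hA := (hτ.analyticAt).eventually_analyticAt
  obtain ⟨W, hW, hWo, hcW⟩ := eventually_nhds_iff.1 (hE.and hA)
  refine ⟨W, hWo, hcW, hcd.implicitFunction hn hinv, ?_, h0, ?_⟩
  · intro q hq
    exact ((hW q hq).2.contDiffAt).contDiffWithinAt
  · intro q hq
    have := (hW q hq).1
    rw [hfu] at this
    exact this

lemma pd2_of_graph (c : ℝ) (hc : c ≠ 0) (s : ℝ) (W : Set (ℝ × ℝ)) (τ : ℝ × ℝ → ℝ)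
    (hW : IsOpen W) (hcW : (c, 0) ∈ W) (hτ : ContDiffOn ℝ 2 τ W) (h0 : τ (c, 0) = -c)
    (hE : ∀ q ∈ W, 12 * (q.1 ^ 2 - τ q ^ 2) - s * (q.1 + τ q) ^ 4 + 12 * q.2 ^ 2 = 0) :
    pd2 τ (c, 0) = 0 ∧ pd2 (pd2 τ) (c, 0) = -1 / c := by
  have hmem : ∀ᶠ y in 𝓝 (0 : ℝ), (c, y) ∈ W :=
    (Continuous.prodMk_right c).continuousAt.eventually (hW.mem_nhds hcW)
  have hg : ∀ y, (c, y) ∈ W → HasDerivAt (fun y => τ (c, y)) (pd2 τ (c, y)) y := fun y hy =>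
    hasDerivAt_pd2 ((hτ.contDiffAt (hW.mem_nhds hy)).differentiableAt (by simp))
  have hg2 : HasDerivAt (fun y => pd2 τ (c, y)) (pd2 (pd2 τ) (c, 0)) 0 := by
    refine hasDerivAt_pd2 ?_
    have h1 : ContDiffAt ℝ 1 (fderiv ℝ τ) (c, 0) :=
      (hτ.contDiffAt (hW.mem_nhds hcW)).fderiv_right (by norm_num)
    exact (h1.differentiableAt (by simp)).clm_apply (differentiableAt_const _)
  -- the once-differentiated equation, valid along the whole segment of `x = c` near the point
  have hone : ∀ y, (c, y) ∈ W →
      -24 * (τ (c, y) * pd2 τ (c, y)) - 4 * s * ((c + τ (c, y)) ^ 3 * pd2 τ (c, y)) + 24 * y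
        = 0 := by
    intro y hy
    have hz : (fun y => 12 * (c ^ 2 - τ (c, y) ^ 2) - s * (c + τ (c, y)) ^ 4 + 12 * y ^ 2)
        =ᶠ[𝓝 y] fun _ => (0 : ℝ) := by
      filter_upwards [(Continuous.prodMk_right c).continuousAt.eventually (hW.mem_nhds hy)]
        with z hz using hE _ hz
    have hd := ((((hg y hy).pow 2).const_sub (c ^ 2)).const_mul 12).sub
        ((((hg y hy).const_add c).pow 4).const_mul s) |>.add
        (((hasDerivAt_id y).pow 2).const_mul 12)
    have := hd.unique ((hasDerivAt_const y (0 : ℝ)).congr_of_eventuallyEq hz)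
    simp at this
    linarith
  have hp : pd2 τ (c, 0) = 0 := by
    have := hone 0 hcW
    rw [h0] at this
    simpa [hc] using this
  refine ⟨hp, ?_⟩
  have hz : (fun y => -24 * (τ (c, y) * pd2 τ (c, y))
      - 4 * s * ((c + τ (c, y)) ^ 3 * pd2 τ (c, y)) + 24 * y) =ᶠ[𝓝 0] fun _ => (0 : ℝ) := by
    filter_upwards [hmem] with y hy using hone y hy
  have hg0 := hg 0 hcW
  have hd := (((hg0.mul hg2).const_mul (-24)).sub
      ((((hg0.const_add c).pow 3).mul hg2).const_mul (4 * s))).add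
      ((hasDerivAt_id (0 : ℝ)).const_mul 24)
  have := hd.unique ((hasDerivAt_const (0 : ℝ) (0 : ℝ)).congr_of_eventuallyEq hz)
  simp [h0, hp] at this
  rw [eq_div_iff hc]
  linarith

/-- for F(t,x,y) = 12(x²−t²) − s(x+t)⁴ + 12y² (s = ±1), one has
    F(−c,c,0) = 0, ∂F/∂t(−c,c,0) = 24c ≠ 0, so there is a local smooth graph
    t = τ(x,y) of the zero set through (−c,c,0); and any such C² graph function τ
    satisfies τ_y(c,0) = 0 and τ_yy(c,0) = −1/c. -/
theorem stmt14 (c : ℝ) (hc : c ≠ 0) (s : ℝ) (hs : s = 1 ∨ s = -1)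
    (F : ℝ → ℝ → ℝ → ℝ)
    (hF : F = fun t x y => 12 * (x ^ 2 - t ^ 2) - s * (x + t) ^ 4 + 12 * y ^ 2) :
    F (-c) c 0 = 0 ∧
    deriv (fun t => F t c 0) (-c) = 24 * c ∧
    24 * c ≠ 0 ∧
    (∃ W : Set (ℝ × ℝ), IsOpen W ∧ (c, 0) ∈ W ∧
      ∃ τ : ℝ × ℝ → ℝ, ContDiffOn ℝ (⊤ : ℕ∞) τ W ∧ τ (c, 0) = -c ∧
        ∀ q ∈ W, F (τ q) q.1 q.2 = 0) ∧
    (∀ (W' : Set (ℝ × ℝ)) (τ : ℝ × ℝ → ℝ), IsOpen W' → (c, 0) ∈ W' →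
      ContDiffOn ℝ 2 τ W' → τ (c, 0) = -c → (∀ q ∈ W', F (τ q) q.1 q.2 = 0) →
      pd2 τ (c, 0) = 0 ∧ pd2 (pd2 τ) (c, 0) = -1 / c) := by
  subst hF
  refine ⟨by simp, ?_, by simpa using hc, exists_smooth_graph c hc s, ?_⟩
  · have hid := hasDerivAt_id (-c)
    have h2 := ((((hid.pow 2).const_sub (c ^ 2)).const_mul 12).sub
        (((hid.const_add c).pow 4).const_mul s)).add_const (12 * (0 : ℝ) ^ 2)
    refine h2.deriv.trans ?_
    simp
    ring
  · intro W τ hW hcW hτ h0 hE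
    exact pd2_of_graph c hc s W τ hW hcW hτ h0 hE
end

section
/- Let Ω ⊆ ℝ² be open and let u, v, ρ, p, c, ψ : Ω → ℝ be functions with ρ, u, v of class C¹, ψ of class C², ρ > 0 and c > 0 on Ω, satisfying: (barotropicity) p_x = c² ρ_x and p_y = c² ρ_y; (steady Euler equations) u u_x + v v_x + p_x/ρ = 0 and u u_y + v v_y + p_y/ρ = 0; (stream function) ψ_x = −ρ v and ψ_y = ρ u. Then at every point of Ω: (ρ²c² − ψ_y²) ψ_xx + 2 ψ_x ψ_y ψ_xy + (ρ²c² − ψ_x²) ψ_yy = ρ³ (u² + v² − c²)(v_x − u_y). In particular, if the flow is irrotational (v_x = u_y), then ψ satisfies (ρ²c² − ψ_y²) ψ_xx + 2 ψ_x ψ_y ψ_xy + (ρ²c² − ψ_x²) ψ_yy = 0. -/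
/-!
Differentiating `ψ_x = -ρv` and `ψ_y = ρu` expresses the second derivatives of `ψ` through the
first derivatives of `ρ, u, v`; the symmetry of second derivatives (`pd1_pd2_comm`) gives two
expressions for `ψ_xy`, and using each of them for one of the two copies in `2 ψ_x ψ_y ψ_xy`
cancels all derivatives of `ρ` in the terms without `c`. In the terms with `c²`, the derivatives of
`ρ` are eliminated by the Euler equations in the form `c² ∇ρ = -ρ (u ∇u + v ∇v)`. What remains is
a polynomial identity.
-/

open Set

/-- Equality of the mixed partial derivatives of a `C²` function at a point. -/
lemma pd1_pd2_comm {f : ℝ × ℝ → ℝ} {q : ℝ × ℝ} (hf : ContDiffAt ℝ 2 f q) :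
    pd1 (pd2 f) q = pd2 (pd1 f) q := by
  have hd : DifferentiableAt ℝ (fderiv ℝ f) q :=
    (hf.fderiv_right (m := 1) (by norm_num)).differentiableAt (by norm_num)
  have key : ∀ a b : ℝ × ℝ,
      fderiv ℝ (fun z => fderiv ℝ f z a) q b = fderiv ℝ (fderiv ℝ f) q b a := by
    intro a b
    rw [fderiv_clm_apply hd (differentiableAt_const a)]
    simp
  have hs : IsSymmSndFDerivAt ℝ f q := hf.isSymmSndFDerivAt (by simp)
  exact (key (0, 1) (1, 0)).trans ((hs (1, 0) (0, 1)).trans (key (1, 0) (0, 1)).symm)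

/-- for a two-dimensional barotropic steady flow without external forces,
    the stream function satisfies
    (ρ²c² − ψ_y²)ψ_xx + 2ψ_xψ_yψ_xy + (ρ²c² − ψ_x²)ψ_yy = ρ³(u² + v² − c²)(v_x − u_y);
    in particular, for irrotational flow the left-hand side vanishes. -/
theorem stmt15 (Ω : Set (ℝ × ℝ)) (hΩ : IsOpen Ω)
    (u v ρ p c ψ : ℝ × ℝ → ℝ)
    (hρ : ContDiffOn ℝ 1 ρ Ω) (hu : ContDiffOn ℝ 1 u Ω) (hv : ContDiffOn ℝ 1 v Ω)
    (hψ : ContDiffOn ℝ 2 ψ Ω)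
    (hρpos : ∀ q ∈ Ω, 0 < ρ q) (hcpos : ∀ q ∈ Ω, 0 < c q)
    (hbaro1 : ∀ q ∈ Ω, pd1 p q = (c q) ^ 2 * pd1 ρ q)
    (hbaro2 : ∀ q ∈ Ω, pd2 p q = (c q) ^ 2 * pd2 ρ q)
    (heuler1 : ∀ q ∈ Ω, u q * pd1 u q + v q * pd1 v q + pd1 p q / ρ q = 0)
    (heuler2 : ∀ q ∈ Ω, u q * pd2 u q + v q * pd2 v q + pd2 p q / ρ q = 0)
    (hstream1 : ∀ q ∈ Ω, pd1 ψ q = -(ρ q * v q))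
    (hstream2 : ∀ q ∈ Ω, pd2 ψ q = ρ q * u q) :
    (∀ q ∈ Ω,
      ((ρ q) ^ 2 * (c q) ^ 2 - (pd2 ψ q) ^ 2) * pd1 (pd1 ψ) q
        + 2 * pd1 ψ q * pd2 ψ q * pd2 (pd1 ψ) q
        + ((ρ q) ^ 2 * (c q) ^ 2 - (pd1 ψ q) ^ 2) * pd2 (pd2 ψ) q
      = (ρ q) ^ 3 * ((u q) ^ 2 + (v q) ^ 2 - (c q) ^ 2) * (pd1 v q - pd2 u q)) ∧
    (∀ q ∈ Ω, pd1 v q = pd2 u q →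
      ((ρ q) ^ 2 * (c q) ^ 2 - (pd2 ψ q) ^ 2) * pd1 (pd1 ψ) q
        + 2 * pd1 ψ q * pd2 ψ q * pd2 (pd1 ψ) q
        + ((ρ q) ^ 2 * (c q) ^ 2 - (pd1 ψ q) ^ 2) * pd2 (pd2 ψ) q = 0) := by
  have main : ∀ q ∈ Ω,
      ((ρ q) ^ 2 * (c q) ^ 2 - (pd2 ψ q) ^ 2) * pd1 (pd1 ψ) q
        + 2 * pd1 ψ q * pd2 ψ q * pd2 (pd1 ψ) q
        + ((ρ q) ^ 2 * (c q) ^ 2 - (pd1 ψ q) ^ 2) * pd2 (pd2 ψ) q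
      = (ρ q) ^ 3 * ((u q) ^ 2 + (v q) ^ 2 - (c q) ^ 2) * (pd1 v q - pd2 u q) := by
    intro q hq
    have hn : Ω ∈ nhds q := hΩ.mem_nhds hq
    have dρ : DifferentiableAt ℝ ρ q := (hρ.contDiffAt hn).differentiableAt (by norm_num)
    have du : DifferentiableAt ℝ u q := (hu.contDiffAt hn).differentiableAt (by norm_num)
    have dv : DifferentiableAt ℝ v q := (hv.contDiffAt hn).differentiableAt (by norm_num)
    have hsymm := pd1_pd2_comm (hψ.contDiffAt hn)
    -- The stream function equations hold near `q`, hence may be differentiated at `q`.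
    have f1 : fderiv ℝ (pd1 ψ) q = -(ρ q • fderiv ℝ v q + v q • fderiv ℝ ρ q) := by
      have he : pd1 ψ =ᶠ[nhds q] fun z => -(ρ z * v z) := by
        filter_upwards [hn] with z hz using hstream1 z hz
      rw [he.fderiv_eq]
      exact (dρ.hasFDerivAt.mul dv.hasFDerivAt).neg.fderiv
    have f2 : fderiv ℝ (pd2 ψ) q = ρ q • fderiv ℝ u q + u q • fderiv ℝ ρ q := by
      have he : pd2 ψ =ᶠ[nhds q] fun z => ρ z * u z := by
        filter_upwards [hn] with z hz using hstream2 z hz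
      rw [he.fderiv_eq]
      exact (dρ.hasFDerivAt.mul du.hasFDerivAt).fderiv
    have h11 : pd1 (pd1 ψ) q = -(ρ q * pd1 v q + v q * pd1 ρ q) := by
      rw [pd1, f1]; rfl
    have h21 : pd2 (pd1 ψ) q = -(ρ q * pd2 v q + v q * pd2 ρ q) := by
      rw [pd2, f1]; rfl
    have h12 : pd1 (pd2 ψ) q = ρ q * pd1 u q + u q * pd1 ρ q := by
      rw [pd1, f2]; rfl
    have h22 : pd2 (pd2 ψ) q = ρ q * pd2 u q + u q * pd2 ρ q := by
      rw [pd2, f2]; rfl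
    rw [hsymm] at h12
    have hne : ρ q ≠ 0 := (hρpos q hq).ne'
    have e1 : ρ q * (u q * pd1 u q + v q * pd1 v q) + (c q) ^ 2 * pd1 ρ q = 0 := by
      have h := heuler1 q hq
      rw [hbaro1 q hq] at h
      field_simp at h
      linear_combination h
    have e2 : ρ q * (u q * pd2 u q + v q * pd2 v q) + (c q) ^ 2 * pd2 ρ q = 0 := by
      have h := heuler2 q hq
      rw [hbaro2 q hq] at h
      field_simp at h
      linear_combination h
    rw [h11, h22, hstream1 q hq, hstream2 q hq]
    linear_combination (-(ρ q) ^ 2 * u q * v q) * h21 - (ρ q) ^ 2 * u q * v q * h12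
      - (ρ q) ^ 2 * v q * e1 + (ρ q) ^ 2 * u q * e2
  refine ⟨main, fun q hq hirr => ?_⟩
  rw [main q hq, hirr, sub_self, mul_zero]
end
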